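/- arXiv:quant-ph/0412063 — 11 statements merged into one kernel-verified Lean document; each statement's English description precedes it below -/
import Mathlib

section
/- Let n ≥ 1 and let ψ₀, α, β ∈ ℂⁿ be unit vectors. Suppose U is a unitary operator on ℂⁿ ⊗ ℂⁿ such that U(α ⊗ ψ₀) = α ⊗ α and U(β ⊗ ψ₀) = β ⊗ β. Then ⟨α, β⟩ = ⟨α, β⟩², and hence ⟨α, β⟩ = 0 or ⟨α, β⟩ = 1: any two states that can both be cloned by a single unitary device are either orthogonal or identical. -/
open scoped ComplexOrder

noncomputable section

/-- The standard inner product on `ℂ^ι`, conjugate-linear in the first argument. -/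
def inn {ι : Type*} [Fintype ι] (x y : ι → ℂ) : ℂ :=
  ∑ i, (starRingEnd ℂ) (x i) * y i

/-- The tensor product of two vectors, with coordinates indexed by pairs. -/
def tens {m n : ℕ} (x : Fin m → ℂ) (y : Fin n → ℂ) : Fin m × Fin n → ℂ :=
  fun p => x p.1 * y p.2

theorem inn_eq_dot {ι : Type*} [Fintype ι] (x y : ι → ℂ) : inn x y = dotProduct (star x) y := rfl

theorem inn_tens {m n : ℕ} (a c : Fin m → ℂ) (b d : Fin n → ℂ) :
    inn (tens a b) (tens c d) = inn a c * inn b d := by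
  simp only [inn, tens, Fintype.sum_prod_type, Finset.sum_mul_sum, map_mul]
  refine Finset.sum_congr rfl fun i _ => Finset.sum_congr rfl fun j _ => ?_
  ring

theorem inn_unitary {ι : Type*} [Fintype ι] [DecidableEq ι] (U : Matrix ι ι ℂ)
    (hU : U ∈ Matrix.unitaryGroup ι ℂ) (x y : ι → ℂ) :
    inn (U.mulVec x) (U.mulVec y) = inn x y := by
  have h : U.conjTranspose * U = 1 := Matrix.mem_unitaryGroup_iff'.mp hU
  rw [inn_eq_dot, inn_eq_dot, Matrix.star_mulVec, Matrix.dotProduct_mulVec,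
    Matrix.vecMul_vecMul, h, Matrix.vecMul_one]

/-- Any two states that can both be cloned by a single unitary device satisfy
`⟨α,β⟩ = ⟨α,β⟩²`, hence are either orthogonal or identical. -/
theorem stmt0 (n : ℕ) (hn : 1 ≤ n) (ψ₀ α β : Fin n → ℂ)
    (hψ₀ : inn ψ₀ ψ₀ = 1) (hα : inn α α = 1) (hβ : inn β β = 1)
    (U : Matrix (Fin n × Fin n) (Fin n × Fin n) ℂ)
    (hU : U ∈ Matrix.unitaryGroup (Fin n × Fin n) ℂ)
    (hUα : U.mulVec (tens α ψ₀) = tens α α)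
    (hUβ : U.mulVec (tens β ψ₀) = tens β β) :
    inn α β = (inn α β) ^ 2 ∧ (inn α β = 0 ∨ inn α β = 1) := by
  have h : inn α β = (inn α β) ^ 2 := by
    have h1 := inn_unitary U hU (tens α ψ₀) (tens β ψ₀)
    rw [hUα, hUβ, inn_tens, inn_tens, hψ₀, mul_one] at h1
    rw [sq, h1]
  refine ⟨h, ?_⟩
  have h2 : inn α β * (inn α β - 1) = 0 := by linear_combination -h
  rcases mul_eq_zero.mp h2 with h3 | h3
  · exact Or.inl h3
  · exact Or.inr (sub_eq_zero.mp h3)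
end
end

section
/- Let n ≥ 2. There is no unitary operator U on ℂⁿ ⊗ ℂⁿ together with a unit vector ψ₀ ∈ ℂⁿ such that U(α ⊗ ψ₀) = α ⊗ α for every unit vector α ∈ ℂⁿ (the no-cloning theorem: no general cloning device is possible, since by linearity it would take a superposition of two clonable states to an entangled state rather than to the required product state). -/
open scoped ComplexOrder

noncomputable section

/-- The no-cloning theorem: for `n ≥ 2` there is no unitary `U` on `ℂⁿ ⊗ ℂⁿ` and unit
vector `ψ₀` such that `U (α ⊗ ψ₀) = α ⊗ α` for every unit vector `α`. -/
theorem stmt1 (n : ℕ) (hn : 2 ≤ n) :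
    ¬ ∃ (U : Matrix (Fin n × Fin n) (Fin n × Fin n) ℂ) (ψ₀ : Fin n → ℂ),
        U ∈ Matrix.unitaryGroup (Fin n × Fin n) ℂ ∧ inn ψ₀ ψ₀ = 1 ∧
        ∀ α : Fin n → ℂ, inn α α = 1 → U.mulVec (tens α ψ₀) = tens α α := by
  rintro ⟨U, ψ, -, -, h⟩
  obtain ⟨a, b, hab⟩ : ∃ a b : Fin n, a ≠ b :=
    ⟨⟨0, by omega⟩, ⟨1, by omega⟩, by simp [Fin.ext_iff]⟩
  have hs : ∀ c : Fin n, inn (Pi.single c (1 : ℂ)) (Pi.single c (1 : ℂ)) = 1 := by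
    intro c
    simp [inn, Pi.single_apply]
  have h1 := h _ (hs a)
  have h2 := h _ (hs b)
  have hc : inn (fun i => (3 / 5 : ℂ) * Pi.single (M := fun _ : Fin n => ℂ) a 1 i
        + (4 / 5 : ℂ) * Pi.single (M := fun _ : Fin n => ℂ) b 1 i)
      (fun i => (3 / 5 : ℂ) * Pi.single (M := fun _ : Fin n => ℂ) a 1 i
        + (4 / 5 : ℂ) * Pi.single (M := fun _ : Fin n => ℂ) b 1 i) = 1 := by
    have hpt : ∀ i : Fin n, (starRingEnd ℂ) ((3 / 5 : ℂ) * Pi.single (M := fun _ : Fin n => ℂ) a 1 i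
        + (4 / 5 : ℂ) * Pi.single (M := fun _ : Fin n => ℂ) b 1 i) *
        ((3 / 5 : ℂ) * Pi.single (M := fun _ : Fin n => ℂ) a 1 i
        + (4 / 5 : ℂ) * Pi.single (M := fun _ : Fin n => ℂ) b 1 i) =
        (if i = a then (9 / 25 : ℂ) else 0) + (if i = b then (16 / 25 : ℂ) else 0) := by
      intro i
      by_cases hia : i = a
      · subst hia
        simp [hab, Complex.conj_ofNat]
        norm_num
      · by_cases hib : i = b
        · subst hib
          simp [hia, Complex.conj_ofNat]
          norm_num
        · simp [hia, hib]
    unfold inn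
    rw [Finset.sum_congr rfl (fun i _ => hpt i), Finset.sum_add_distrib]
    simp
    norm_num
  have h3 := h _ hc
  have hl : tens (fun i => (3 / 5 : ℂ) * Pi.single (M := fun _ : Fin n => ℂ) a 1 i
        + (4 / 5 : ℂ) * Pi.single (M := fun _ : Fin n => ℂ) b 1 i) ψ
      = (3 / 5 : ℂ) • tens (Pi.single a (1 : ℂ)) ψ
        + (4 / 5 : ℂ) • tens (Pi.single b (1 : ℂ)) ψ := by
    funext p
    simp only [tens, Pi.add_apply, Pi.smul_apply, smul_eq_mul]
    ring
  rw [hl, Matrix.mulVec_add, Matrix.mulVec_smul, Matrix.mulVec_smul, h1, h2] at h3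
  have h4 := congrFun h3 (a, b)
  simp [tens, hab, hab.symm] at h4
end
end

section
/- Suppose that for each integer n ≥ 2, H_n is a real-valued function on the set of probability vectors (p_1,…,p_n) (p_i ≥ 0, Σ_i p_i = 1), and that: (i) each H_n is invariant under permutations of its arguments; (ii) the function p ↦ H_2(p, 1−p) is continuous on [0,1]; (iii) H_2(p₀, 1−p₀) > 0 for at least one p₀ ∈ [0,1]; (iv) (Faddeev grouping axiom) for every n ≥ 2 and every probability vector (p_1,…,p_{n−1}, q_1, q_2) of length n+1 with p_n := q_1 + q_2 > 0, one has H_{n+1}(p_1,…,p_{n−1},q_1,q_2) = H_n(p_1,…,p_{n−1},p_n) + p_n · H_2(q_1/p_n, q_2/p_n). Then there exists a constant K > 0 such that H_n(p_1,…,p_n) = −K · Σ_{i=1}^n p_i log₂ p_i for every n ≥ 2 and every probability vector (Faddeev's uniqueness theorem for the Shannon information). -/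
noncomputable section

/-- A probability vector: nonnegative entries summing to one. -/
def IsProbVec {n : ℕ} (p : Fin n → ℝ) : Prop :=
  (∀ i, 0 ≤ p i) ∧ ∑ i, p i = 1

open Filter Topology in
lemma fad_core (h : ℝ → ℝ) (hc : ContinuousOn h (Set.Icc 0 1))
    (h0 : h 0 = 0) (h1 : h 1 = 0) (hhalf : h (1/2) = 0) (f : ℝ → ℝ → ℝ)
    (hf : ∀ x y, f x y = (x + y) * h (x / (x + y)))
    (coc : ∀ x y z, 0 < x → 0 < y → 0 < z → f x y + f (x + y) z = f x (y + z) + f y z) :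
    ∀ x ∈ Set.Icc (0:ℝ) 1, h x = 0 := by
  have hom : ∀ k x y : ℝ, 0 < k → f (k * x) (k * y) = k * f x y := by
    intro k x y hk
    rw [hf, hf, ← mul_add, mul_div_mul_left _ _ hk.ne']
    ring
  obtain ⟨L, hL⟩ : ∃ L : ℕ → ℝ, ∀ n, L n = ∑ k ∈ Finset.range n, f k 1 := ⟨_, fun _ => rfl⟩
  have L0 : L 0 = 0 := by simp [hL]
  have Ls : ∀ n : ℕ, L (n + 1) = L n + f n 1 := by
    intro n; rw [hL, hL, Finset.sum_range_succ]
  have L1 : L 1 = 0 := by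
    rw [Ls, L0, hf]; simp [h0]
  have L2 : L 2 = 0 := by
    rw [Ls 1, L1, hf]
    norm_num at hhalf ⊢
    exact hhalf
  have fL : ∀ m n : ℕ, 0 < m → f m ((n + 1 : ℕ) : ℝ) = L (m + (n + 1)) - L m - L (n + 1) := by
    intro m n hm
    have hm' : (0:ℝ) < m := by exact_mod_cast hm
    induction n with
    | zero => rw [Ls m]; simp [L1]
    | succ n ih =>
      have := coc m ((n + 1 : ℕ) : ℝ) 1 hm' (by positivity) one_pos
      have e1 := Ls (n + 1)
      have e2 := Ls (m + (n + 1))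
      rw [show m + (n + 1 + 1) = m + (n + 1) + 1 by ring, e2, e1]
      push_cast at *
      linarith
  have Lmul : ∀ k n : ℕ, 0 < k → L (k * (n + 1)) = k * L (n + 1) + (n + 1) * L k := by
    intro k n hk
    have hk' : (0:ℝ) < k := by exact_mod_cast hk
    induction n with
    | zero => simp [L1]
    | succ n ih =>
      obtain ⟨j, rfl⟩ : ∃ j, k = j + 1 := ⟨k - 1, by omega⟩
      have a1 := fL ((j + 1) * (n + 1)) j (by positivity)
      have a2 := hom ((j + 1 : ℕ) : ℝ) ((n + 1 : ℕ) : ℝ) 1 hk'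
      have a3 := Ls (n + 1)
      rw [show (j + 1) * (n + 1 + 1) = (j + 1) * (n + 1) + (j + 1) by ring, a3]
      push_cast at *
      rw [mul_one] at a2
      linarith
  have Lpow : ∀ n k : ℕ, 0 < n → n * L (n ^ k) = k * n ^ k * L n := by
    intro n k hn
    induction k with
    | zero => simp [L1]
    | succ k ih =>
      obtain ⟨j, rfl⟩ : ∃ j, n = j + 1 := ⟨n - 1, by omega⟩
      have := Lmul ((j + 1) ^ k) j (by positivity)
      rw [pow_succ, this]
      push_cast at *
      linear_combination ((j:ℝ) + 1) * ih
  have bound : ∀ ε : ℝ, 0 < ε → ∃ C : ℝ, 0 ≤ C ∧ ∀ n : ℕ, 0 < n →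
      |L n| ≤ n * (C + ε * (Nat.log 2 n : ℕ)) := by
    intro ε hε
    have t1 : Tendsto (fun n : ℕ => h ((n : ℝ) / (n + 1))) atTop (𝓝 0) := by
      have := hc 1 (by simp)
      rw [ContinuousWithinAt, h1] at this
      refine this.comp (tendsto_nhdsWithin_iff.2 ⟨tendsto_natCast_div_add_atTop (1:ℝ), ?_⟩)
      refine Eventually.of_forall fun n => ⟨by positivity, ?_⟩
      rw [div_le_one (by positivity)]; linarith
    obtain ⟨N, hN⟩ := (Metric.tendsto_atTop.1 t1) ε hε
    have hC0 : 0 ≤ ∑ k ∈ Finset.range (N + 2), |L k| := Finset.sum_nonneg fun _ _ => abs_nonneg _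
    refine ⟨∑ k ∈ Finset.range (N + 2), |L k|, hC0, ?_⟩
    set C := ∑ k ∈ Finset.range (N + 2), |L k| with hC
    intro n
    induction n using Nat.strong_induction_on with
    | _ n ih =>
    intro hn
    by_cases hs : n < N + 2
    · have a : |L n| ≤ C := Finset.single_le_sum (f := fun k => |L k|)
        (fun _ _ => abs_nonneg _) (Finset.mem_range.2 hs)
      have b : (1:ℝ) ≤ n := by exact_mod_cast hn
      have c : (0:ℝ) ≤ ε * (Nat.log 2 n : ℕ) := by positivity
      nlinarith
    · have hlog : Nat.log 2 n = Nat.log 2 (n / 2) + 1 :=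
        Nat.log_of_one_lt_of_le (by norm_num) (by omega)
      obtain ⟨m, hm⟩ : ∃ m, m = n / 2 := ⟨_, rfl⟩
      rw [hlog, ← hm]
      have im := ih m (by omega) (by omega)
      have L2m : L (2 * m) = 2 * L m := by
        have := Lmul 2 (m - 1) (by norm_num)
        rw [show m - 1 + 1 = m by omega, L2] at this
        simpa using this
      have mp : (0:ℝ) ≤ m := by positivity
      have lp : (0:ℝ) ≤ ε * (Nat.log 2 m : ℕ) := by positivity
      rcases Nat.even_or_odd' n with ⟨j, hj | hj⟩
      · have : j = m := by omega
        subst this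
        rw [hj, L2m, abs_mul, abs_two]
        push_cast
        nlinarith
      · have : j = m := by omega
        subst this
        have hd := hN (2 * j) (by omega)
        rw [Real.dist_eq, sub_zero] at hd
        rw [hj, Ls, L2m, hf]
        have : |((2 * j : ℕ) + 1 : ℝ) * h (((2 * j : ℕ) : ℝ) / ((2 * j : ℕ) + 1))|
            ≤ (2 * j + 1) * ε := by
          rw [abs_mul, abs_of_nonneg (by positivity)]
          push_cast at *
          gcongr
        refine (abs_add_le _ _).trans ?_
        rw [abs_mul, abs_two]
        push_cast at *
        nlinarith
  have Lz : ∀ n : ℕ, 0 < n → L n = 0 := by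
    intro n hn
    have hn' : (0:ℝ) < n := by exact_mod_cast hn
    have key : ∀ ε : ℝ, 0 < ε → |L n| ≤ ε * n * n := by
      intro ε hε
      obtain ⟨C, hC0, hC⟩ := bound ε hε
      have kb : ∀ k : ℕ, (k : ℝ) * |L n| ≤ n * (C + ε * (k * n)) := by
        intro k
        have b := hC (n ^ k) (by positivity)
        have lg : Nat.log 2 (n ^ k) ≤ n * k := by
          calc Nat.log 2 (n ^ k) ≤ Nat.log 2 ((2 ^ n) ^ k) :=
                Nat.log_mono_right (Nat.pow_le_pow_left Nat.lt_two_pow_self.le k)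
            _ = n * k := by rw [← pow_mul, Nat.log_pow (by norm_num)]
        have lg' : ((Nat.log 2 (n ^ k) : ℕ) : ℝ) ≤ k * n := by
          rw [mul_comm]; exact_mod_cast lg
        have e : (n : ℝ) * |L (n ^ k)| = n ^ k * (k * |L n|) := by
          rw [← abs_of_pos hn', ← abs_mul, abs_of_pos hn', Lpow n k hn, abs_mul, abs_mul,
            Nat.abs_cast, abs_of_nonneg (by positivity : (0:ℝ) ≤ (n:ℝ) ^ k)]
          ring
        have p : (0:ℝ) < (n:ℝ) ^ k := by positivity
        refine le_of_mul_le_mul_left ?_ p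
        rw [← e]
        calc (n : ℝ) * |L (n ^ k)| ≤ n * ((n ^ k : ℕ) * (C + ε * (Nat.log 2 (n ^ k) : ℕ))) := by
              gcongr
          _ ≤ n * ((n ^ k : ℕ) * (C + ε * (k * n))) := by gcongr
          _ = _ := by push_cast; ring
      by_contra hlt
      push Not at hlt
      obtain ⟨k, hk⟩ := exists_nat_gt (n * C / (|L n| - ε * n * n))
      rw [div_lt_iff₀ (by linarith)] at hk
      have := kb k
      nlinarith
    by_contra hne
    have hp : 0 < |L n| := abs_pos.2 hne
    have := key (|L n| / (2 * n * n)) (by positivity)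
    have e : |L n| / (2 * n * n) * n * n = |L n| / 2 := by field_simp
    rw [e] at this
    linarith
  have hrat : ∀ a k : ℕ, a ≤ k → 0 < k → h ((a:ℝ) / k) = 0 := by
    intro a k hak hk
    rcases Nat.eq_zero_or_pos a with rfl | ha
    · simpa using h0
    rcases hak.eq_or_lt with rfl | hlt
    · rw [div_self (by positivity)]; exact h1
    obtain ⟨b, rfl⟩ : ∃ b, k = a + (b + 1) := ⟨k - a - 1, by omega⟩
    have := fL a b ha
    rw [Lz _ hk, Lz _ ha, Lz _ (Nat.succ_pos b), hf] at this
    have h2 : ((a:ℝ) + ((b + 1 : ℕ) : ℝ)) ≠ 0 := by positivity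
    rw [Nat.cast_add]
    simpa [h2] using (mul_eq_zero.1 (this.trans (by ring))).resolve_left h2
  intro x hx
  have t : Tendsto (fun k : ℕ => (⌊x * (k:ℝ)⌋₊ : ℝ) / k) atTop (𝓝[Set.Icc 0 1] x) := by
    refine tendsto_nhdsWithin_iff.2 ⟨(tendsto_nat_floor_mul_div_atTop hx.1).comp
      tendsto_natCast_atTop_atTop, Eventually.of_forall fun k => ⟨by positivity, ?_⟩⟩
    refine div_le_one_of_le₀ ?_ (by positivity)
    refine (Nat.floor_le (mul_nonneg hx.1 (by positivity))).trans ?_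
    exact mul_le_of_le_one_left (by positivity) hx.2
  have t2 := (hc x hx).tendsto.comp t
  refine tendsto_nhds_unique t2 ?_
  refine tendsto_const_nhds.congr' ?_
  filter_upwards [eventually_gt_atTop 0] with k hk
  symm
  refine hrat _ k ?_ hk
  have : (⌊x * (k:ℝ)⌋₊ : ℝ) ≤ k :=
    (Nat.floor_le (mul_nonneg hx.1 (by positivity))).trans
      (mul_le_of_le_one_left (by positivity) hx.2)
  exact_mod_cast this

lemma fad_zero (H : ∀ n : ℕ, (Fin n → ℝ) → ℝ)
    (hsymm : ∀ n, 2 ≤ n → ∀ σ : Equiv.Perm (Fin n), ∀ p : Fin n → ℝ,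
      IsProbVec p → H n (p ∘ σ) = H n p)
    (hcont : ContinuousOn (fun x : ℝ => H 2 ![x, 1 - x]) (Set.Icc 0 1))
    (hhalf : H 2 ![1/2, 1/2] = 0)
    (hgroup : ∀ (m : ℕ) (p : Fin (m + 1) → ℝ) (q₁ q₂ : ℝ),
      (∀ i, 0 ≤ p i) → 0 ≤ q₁ → 0 ≤ q₂ → (∑ i, p i) + q₁ + q₂ = 1 → 0 < q₁ + q₂ →
      H (m + 3) (Fin.snoc (Fin.snoc p q₁) q₂)
        = H (m + 2) (Fin.snoc p (q₁ + q₂))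
          + (q₁ + q₂) * H 2 ![q₁ / (q₁ + q₂), q₂ / (q₁ + q₂)]) :
    ∀ n, 2 ≤ n → ∀ p : Fin n → ℝ, IsProbVec p → H n p = 0 := by
  have s2 : ∀ a b : ℝ, 0 ≤ a → 0 ≤ b → a + b = 1 → H 2 ![a, b] = H 2 ![b, a] := by
    intro a b ha hb hab
    rw [← hsymm 2 le_rfl (Equiv.swap 0 1) ![a, b]]
    · congr 1; ext i; fin_cases i <;> simp
    · refine ⟨fun i => by fin_cases i <;> simpa, by simpa [Fin.sum_univ_two] using hab⟩
  have s3 : ∀ a b c : ℝ, 0 ≤ a → 0 ≤ b → 0 ≤ c → a + b + c = 1 →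
      H 3 ![a, b, c] = H 3 ![c, a, b] := by
    intro a b c ha hb hc habc
    rw [← hsymm 3 (by norm_num) (finRotate 3).symm ![a, b, c]]
    · congr 1; ext i; fin_cases i <;> rfl
    · refine ⟨fun i => by fin_cases i <;> simpa, by simpa [Fin.sum_univ_three] using habc⟩
  have g3 : ∀ a b c : ℝ, 0 ≤ a → 0 ≤ b → 0 ≤ c → a + b + c = 1 → 0 < b + c →
      H 3 ![a, b, c] = H 2 ![a, b + c] + (b + c) * H 2 ![b / (b + c), c / (b + c)] := by
    intro a b c ha hb hc habc hp
    have := hgroup 0 ![a] b c (by simpa using ha) hb hc (by simpa using habc) hp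
    convert this using 2
    · ext i; fin_cases i <;> rfl
    · congr 1; ext i; fin_cases i <;> rfl
  have e10 : H 2 ![1, 0] = H 2 ![0, 1] := s2 1 0 (by simp) (by simp) (by simp)
  have h01 : H 2 ![0, 1] = 0 := by
    have a1 := g3 (1/2) (1/2) 0 (by norm_num) (by norm_num) (by norm_num) (by norm_num)
      (by norm_num)
    have a2 := g3 0 (1/2) (1/2) (by norm_num) (by norm_num) (by norm_num) (by norm_num)
      (by norm_num)
    have a3 := s3 (1/2) (1/2) 0 (by norm_num) (by norm_num) (by norm_num) (by norm_num)
    norm_num at a1 a2 a3 hhalf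
    rw [e10] at a1
    linarith
  have core := fad_core (fun x : ℝ => H 2 ![x, 1 - x]) hcont (by simpa using h01)
    (by simpa [e10] using h01) (by norm_num at hhalf ⊢; exact hhalf)
    (fun x y => (x + y) * H 2 ![x / (x + y), 1 - x / (x + y)]) (fun _ _ => rfl)
    (by
      have T : ∀ x y z : ℝ, 0 < x → 0 < y → 0 < z →
          (x + y + z) * H 3 ![x / (x + y + z), y / (x + y + z), z / (x + y + z)]
          = (x + y + z) * H 2 ![x / (x + y + z), (y + z) / (x + y + z)]
            + (y + z) * H 2 ![y / (y + z), z / (y + z)] := by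
        intro x y z hx hy hz
        rw [g3 _ _ _ (by positivity) (by positivity) (by positivity) (by field_simp)
          (by positivity)]
        rw [← add_div, div_div_div_cancel_right₀ (by positivity),
          div_div_div_cancel_right₀ (by positivity)]
        field_simp
      intro x y z hx hy hz
      have t1 := T x y z hx hy hz
      have t2 := T z x y hz hx hy
      rw [show z + x + y = x + y + z by ring] at t2
      have t3 := s3 (x / (x + y + z)) (y / (x + y + z)) (z / (x + y + z)) (by positivity)
        (by positivity) (by positivity) (by field_simp)
      have t4 := s2 (z / (x + y + z)) ((x + y) / (x + y + z)) (by positivity)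
        (by positivity) (by field_simp; ring)
      have e1 : 1 - x / (x + y) = y / (x + y) := by field_simp; ring
      have e2 : 1 - (x + y) / (x + y + z) = z / (x + y + z) := by field_simp; ring
      have e3 : 1 - x / (x + y + z) = (y + z) / (x + y + z) := by field_simp; ring
      have e4 : 1 - y / (y + z) = z / (y + z) := by field_simp; ring
      rw [← add_assoc x y z, e1, e2, e3, e4]
      rw [t3] at t1
      rw [t4] at t2
      linarith)
  have z2 : ∀ a b : ℝ, 0 ≤ a → 0 ≤ b → a + b = 1 → H 2 ![a, b] = 0 := by
    intro a b ha hb hab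
    have := core a ⟨ha, by linarith⟩
    rwa [show b = 1 - a by linarith]
  intro n hn
  obtain ⟨k, rfl⟩ : ∃ k, n = k + 2 := ⟨n - 2, by omega⟩
  clear hn
  induction k with
  | zero =>
    intro p hp
    have e : p = ![p 0, p 1] := by ext i; fin_cases i <;> rfl
    have hs := hp.2
    rw [Fin.sum_univ_two] at hs
    rw [e]
    exact z2 _ _ (hp.1 0) (hp.1 1) hs
  | succ k ih =>
    have main : ∀ p : Fin (k + 3) → ℝ, IsProbVec p → 0 < p (Fin.last _) → H (k + 3) p = 0 := by
      intro p hp hl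
      obtain ⟨r, q1, q2, rfl⟩ : ∃ (r : Fin (k + 1) → ℝ) (q1 q2 : ℝ),
          p = Fin.snoc (Fin.snoc r q1) q2 :=
        ⟨Fin.init (Fin.init p), Fin.init p (Fin.last _), p (Fin.last _), by
          rw [Fin.snoc_init_self, Fin.snoc_init_self]⟩
      have hs := hp.2
      rw [Fin.sum_snoc, Fin.sum_snoc] at hs
      have hq2 : 0 < q2 := by simpa using hl
      have hq1 : 0 ≤ q1 := by
        have := hp.1 (Fin.castSucc (Fin.last _))
        rwa [Fin.snoc_castSucc, Fin.snoc_last] at this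
      have hr : ∀ i, 0 ≤ r i := by
        intro i
        have := hp.1 (Fin.castSucc (Fin.castSucc i))
        rwa [Fin.snoc_castSucc, Fin.snoc_castSucc] at this
      rw [hgroup k r q1 q2 hr hq1 hq2.le hs (by positivity),
        z2 _ _ (by positivity) (by positivity) (by field_simp), ih]
      · simp
      · refine ⟨fun i => ?_, ?_⟩
        · refine Fin.lastCases ?_ (fun j => ?_) i
          · rw [Fin.snoc_last]; positivity
          · rw [Fin.snoc_castSucc]; exact hr j
        · rw [Fin.sum_snoc]; linarith
    intro p hp
    obtain ⟨i, hi⟩ : ∃ i, 0 < p i := by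
      by_contra hcon
      push Not at hcon
      have : ∑ i, p i ≤ 0 := Finset.sum_nonpos fun i _ => hcon i
      rw [hp.2] at this
      linarith
    have hp' : IsProbVec (p ∘ Equiv.swap i (Fin.last _)) :=
      ⟨fun j => hp.1 _, by rw [← hp.2]; exact Equiv.sum_comp _ p⟩
    rw [← hsymm (k + 3) (by omega) (Equiv.swap i (Fin.last _)) p hp]
    exact main _ hp' (by simpa using hi)

theorem stmt2 (H : ∀ n : ℕ, (Fin n → ℝ) → ℝ)
    (hsymm : ∀ n, 2 ≤ n → ∀ σ : Equiv.Perm (Fin n), ∀ p : Fin n → ℝ,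
      IsProbVec p → H n (p ∘ σ) = H n p)
    (hcont : ContinuousOn (fun x : ℝ => H 2 ![x, 1 - x]) (Set.Icc 0 1))
    (hpos : ∃ x ∈ Set.Icc (0 : ℝ) 1, 0 < H 2 ![x, 1 - x])
    (hgroup : ∀ (m : ℕ) (p : Fin (m + 1) → ℝ) (q₁ q₂ : ℝ),
      (∀ i, 0 ≤ p i) → 0 ≤ q₁ → 0 ≤ q₂ → (∑ i, p i) + q₁ + q₂ = 1 → 0 < q₁ + q₂ →
      H (m + 3) (Fin.snoc (Fin.snoc p q₁) q₂)
        = H (m + 2) (Fin.snoc p (q₁ + q₂))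
          + (q₁ + q₂) * H 2 ![q₁ / (q₁ + q₂), q₂ / (q₁ + q₂)]) :
    ∃ K : ℝ, 0 < K ∧ ∀ n, 2 ≤ n → ∀ p : Fin n → ℝ, IsProbVec p →
      H n p = -K * ∑ i, p i * Real.logb 2 (p i) := by
  obtain ⟨K, hK⟩ : ∃ K, K = H 2 ![1/2, 1/2] := ⟨_, rfl⟩
  have key := fad_zero (fun n p => H n p + K * ∑ i, p i * Real.logb 2 (p i))
    (by
      intro n hn σ p hp
      rw [hsymm n hn σ p hp]
      congr 2
      exact Equiv.sum_comp σ (fun i => p i * Real.logb 2 (p i)))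
    (by
      refine hcont.add (Continuous.continuousOn ?_)
      have c : Continuous fun x : ℝ => x * Real.logb 2 x := by
        have := Real.continuous_mul_log.div_const (Real.log 2)
        simpa [Real.logb, mul_div_assoc] using this
      simp only [Fin.sum_univ_two, Matrix.cons_val_zero, Matrix.cons_val_one]
      exact continuous_const.mul (c.add (c.comp (continuous_const.sub continuous_id))))
    (by
      have l : Real.logb 2 (1/2) = -1 := by
        rw [one_div, Real.logb_inv, Real.logb_self_eq_one (by norm_num)]
      simp only [Fin.sum_univ_two, Matrix.cons_val_zero, Matrix.cons_val_one]
      rw [l, ← hK]; ring)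
    (by
      intro m p q₁ q₂ hp h1 h2 hs hq
      have gl : ∀ q, 0 ≤ q → (q₁ + q₂) * (q / (q₁ + q₂) * Real.logb 2 (q / (q₁ + q₂)))
          = q * Real.logb 2 q - q * Real.logb 2 (q₁ + q₂) := by
        intro q hq0
        rcases hq0.eq_or_lt with rfl | hq0
        · simp
        rw [Real.logb_div hq0.ne' hq.ne']
        field_simp
      have g1 := gl q₁ h1
      have g2 := gl q₂ h2
      rw [hgroup m p q₁ q₂ hp h1 h2 hs hq]
      simp only [Fin.sum_univ_castSucc (n := m + 2), Fin.sum_univ_castSucc (n := m + 1),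
        Fin.snoc_castSucc, Fin.snoc_last, Fin.sum_univ_two, Matrix.cons_val_zero,
        Matrix.cons_val_one]
      linear_combination (-K) * g1 - K * g2)
  have fin : ∀ n, 2 ≤ n → ∀ p : Fin n → ℝ, IsProbVec p →
      H n p = -K * ∑ i, p i * Real.logb 2 (p i) := by
    intro n hn p hp
    have := key n hn p hp
    linarith
  refine ⟨K, ?_, fin⟩
  obtain ⟨x, hx, hpx⟩ := hpos
  have hx1 : 0 ≤ 1 - x := by linarith [hx.2]
  rw [fin 2 le_rfl _ ⟨fun i => by fin_cases i; exacts [hx.1, hx1], by simp [Fin.sum_univ_two]⟩,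
    Fin.sum_univ_two] at hpx
  simp only [Matrix.cons_val_zero, Matrix.cons_val_one] at hpx
  have n1 : x * Real.logb 2 x ≤ 0 :=
    mul_nonpos_of_nonneg_of_nonpos hx.1 (Real.logb_nonpos (by norm_num) hx.1 hx.2)
  have n2 : (1 - x) * Real.logb 2 (1 - x) ≤ 0 :=
    mul_nonpos_of_nonneg_of_nonpos hx1
      (Real.logb_nonpos (by norm_num) hx1 (by linarith [hx.1]))
  by_contra hneg
  push Not at hneg
  nlinarith
end
end

section
/- Let ρ_a (a in a finite set A) be density matrices on ℂ^d, let (p_a) be a probability vector on A, and let (E_b) (b in a finite set B) be positive semidefinite d×d matrices with Σ_b E_b = I (a POVM). Define the joint distribution P(a,b) = p_a Tr(ρ_a E_b) (a probability distribution on A×B), with marginals P_A(a) = p_a and P_B(b) = Σ_a p_a Tr(ρ_a E_b), and the mutual information H(A:B) = H(P_A) + H(P_B) − H(P). Then H(A:B) ≤ S(ρ) − Σ_a p_a S(ρ_a), where ρ = Σ_a p_a ρ_a (the Holevo bound). -/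
open scoped ComplexOrder

noncomputable section

/-- A density matrix: positive semidefinite with trace one. -/
def IsDensity {ι : Type*} [Fintype ι] (ρ : Matrix ι ι ℂ) : Prop :=
  ρ.PosSemidef ∧ ρ.trace = 1

/-- The Shannon entropy `−Σ pᵢ log₂ pᵢ` (with the convention `0 · log₂ 0 = 0`). -/
def shannon {ι : Type*} [Fintype ι] (p : ι → ℝ) : ℝ :=
  -∑ i, p i * Real.logb 2 (p i)

/-- The von Neumann entropy `−Σ λᵢ log₂ λᵢ` of a (Hermitian) matrix, where the `λᵢ`
are its eigenvalues counted with multiplicity. -/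
def vnEntropy {d : ℕ} (ρ : Matrix (Fin d) (Fin d) ℂ) : ℝ :=
  if h : ρ.IsHermitian then
    -∑ i, h.eigenvalues i * Real.logb 2 (h.eigenvalues i)
  else 0

open scoped Matrix
open Filter Topology

lemma term_deriv (w l m : ℝ) (hl : 0 ≤ l) (hm : 0 ≤ m) (h : m = 0 → w * l = 0)
    (t : ℝ) (ht : 0 ≤ t) :
    HasDerivAt (fun T => w * l * Real.log (m + T * l)) (w * (l ^ 2 / (m + t * l))) t := by
  by_cases hwl : w * l = 0
  · have : w * (l ^ 2 / (m + t * l)) = 0 := by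
      rcases mul_eq_zero.mp hwl with h | h <;> simp [h]
    rw [this]; simp only [hwl, zero_mul]
    exact hasDerivAt_const _ _
  · have hm' : 0 < m := lt_of_le_of_ne hm (fun e => hwl (h e.symm))
    have hp : 0 < m + t * l := by positivity
    have h1 : HasDerivAt (fun T => m + T * l) l t := by
      simpa using ((hasDerivAt_id t).mul_const l).const_add m
    have h2 := (h1.log hp.ne').const_mul (w * l)
    exact h2.congr_deriv (by ring)

lemma term_lim (w l m : ℝ) (hl : 0 ≤ l) :
    Tendsto (fun T : ℝ => w * l * Real.log (m + T * l) - w * l * Real.log T) atTop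
      (𝓝 (w * l * Real.log l)) := by
  rcases hl.eq_or_lt with h | h
  · subst h; simp
  · have h1 : Tendsto (fun T : ℝ => m / T + l) atTop (𝓝 l) := by
      simpa using (tendsto_const_nhds (x := m)).div_atTop tendsto_id |>.add_const l
    have h2 := ((Real.continuousAt_log h.ne').tendsto.comp h1).const_mul (w * l)
    refine h2.congr' ?_
    have h3 : ∀ᶠ T : ℝ in atTop, 0 < m / T + l := h1.eventually (lt_mem_nhds h)
    filter_upwards [eventually_gt_atTop 0, h3] with T hT hT2
    have : m + T * l = T * (m / T + l) := by field_simp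
    simp only [Function.comp]
    rw [this, Real.log_mul hT.ne' hT2.ne']
    ring

lemma scalar_ineq {I J : Type*} [Fintype I] [Fintype J] (w l m : I → ℝ) (P Q : J → ℝ)
    (hl : ∀ i, 0 ≤ l i) (hm : ∀ i, 0 ≤ m i)
    (h0 : ∀ i, m i = 0 → w i * l i = 0)
    (hP : ∀ i, 0 ≤ P i) (hQ : ∀ i, 0 ≤ Q i) (h0' : ∀ i, Q i = 0 → P i = 0)
    (hs : ∑ i, w i * l i = ∑ j, P j)
    (ht : ∀ t : ℝ, 0 < t → ∑ j, P j ^ 2 / (Q j + t * P j)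
      ≤ ∑ i, w i * (l i ^ 2 / (m i + t * l i))) :
    ∑ j, P j * (Real.log (P j) - Real.log (Q j))
      ≤ ∑ i, w i * l i * (Real.log (l i) - Real.log (m i)) := by
  set φ : ℝ → ℝ := fun T => ∑ i, w i * l i * Real.log (m i + T * l i)
    - ∑ j, 1 * P j * Real.log (Q j + T * P j) with hφ
  have hd : ∀ t, 0 ≤ t → HasDerivAt φ (∑ i, w i * (l i ^ 2 / (m i + t * l i))
      - ∑ j, 1 * (P j ^ 2 / (Q j + t * P j))) t := by
    intro t ht
    refine HasDerivAt.sub ?_ ?_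
    · exact HasDerivAt.fun_sum fun i _ => term_deriv _ _ _ (hl i) (hm i) (h0 i) t ht
    · exact HasDerivAt.fun_sum fun i _ => term_deriv 1 _ _ (hP i) (hQ i)
        (fun h => by simp [h0' i h]) t ht
  have hmono : MonotoneOn φ (Set.Ici 0) := by
    apply monotoneOn_of_deriv_nonneg (convex_Ici 0)
    · exact fun t h => (hd t h).continuousAt.continuousWithinAt
    · intro t h
      rw [interior_Ici] at h
      exact (hd t (le_of_lt h)).differentiableAt.differentiableWithinAt
    · intro t h
      rw [interior_Ici] at h
      rw [(hd t (le_of_lt h)).deriv]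
      have := ht t h
      simp only [one_mul]; linarith
  have hlim : Tendsto φ atTop (𝓝 (∑ i, w i * l i * Real.log (l i)
      - ∑ j, 1 * P j * Real.log (P j))) := by
    have h1 : Tendsto _ atTop (𝓝 (∑ i, w i * l i * Real.log (l i))) :=
      tendsto_finsetSum Finset.univ fun i _ => term_lim (w i) (l i) (m i) (hl i)
    have h2 : Tendsto _ atTop (𝓝 (∑ j, 1 * P j * Real.log (P j))) :=
      tendsto_finsetSum Finset.univ fun i _ => term_lim 1 (P i) (Q i) (hP i)
    refine (h1.sub h2).congr ?_
    intro T
    simp only [hφ, Finset.sum_sub_distrib, ← Finset.sum_mul]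
    simp only [one_mul, hs]
    ring
  have hle := ge_of_tendsto hlim (by
    filter_upwards [eventually_ge_atTop (0:ℝ)] with T hT
    exact hmono Set.self_mem_Ici hT hT)
  simp only [hφ, one_mul, zero_mul, add_zero] at hle
  simp only [mul_sub, Finset.sum_sub_distrib]
  linarith

lemma cplx_ineq (l m t : ℝ) (hl : 0 ≤ l) (hm : 0 ≤ m) (ht : 0 < t) (x c : ℂ) :
    2 * (l * (x * star c).re) - m * Complex.normSq x - t * (l * Complex.normSq x)
      ≤ Complex.normSq c * (l ^ 2 / (m + t * l)) := by
  rcases hl.eq_or_lt with h | h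
  · subst h
    have := mul_nonneg hm (Complex.normSq_nonneg x)
    simp; linarith
  · have hp : 0 < m + t * l := by positivity
    rw [← mul_div_assoc, le_div_iff₀ hp]
    simp only [Complex.normSq_apply, Complex.mul_re, Complex.star_def, Complex.conj_re, Complex.conj_im]
    nlinarith [sq_nonneg ((m + t * l) * x.re - l * c.re), sq_nonneg ((m + t * l) * x.im - l * c.im)]

section helpers

variable {n : Type*} [Fintype n] [DecidableEq n]

lemma key (ρ σ X U V : Matrix n n ℂ) (l m : n → ℝ) (hl : ∀ i, 0 ≤ l i) (hm : ∀ i, 0 ≤ m i)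
    (hU : U * Uᴴ = 1) (hV : V * Vᴴ = 1)
    (hρ : ρ = U * Matrix.diagonal (fun i => (l i : ℂ)) * Uᴴ)
    (hσ : σ = V * Matrix.diagonal (fun i => (m i : ℂ)) * Vᴴ) (hX : Xᴴ = X) (t : ℝ) (ht : 0 < t) :
    2 * (ρ * X).trace.re - (σ * (X * X)).trace.re - t * (ρ * (X * X)).trace.re
     ≤ ∑ ij : n × n, Complex.normSq ((Uᴴ * V) ij.1 ij.2) * (l ij.1 ^ 2 / (m ij.2 + t * l ij.1)) := by
  set Y := Uᴴ * X * V with hY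
  set C := Uᴴ * V with hC
  have hYH : Yᴴ = Vᴴ * X * U := by simp [hY, Matrix.conjTranspose_mul, hX, Matrix.mul_assoc]
  have hCH : Cᴴ = Vᴴ * U := by simp [hC, Matrix.conjTranspose_mul]
  have e1 : (ρ * X).trace = (Matrix.diagonal (fun i => (l i : ℂ)) * (Y * Cᴴ)).trace := by
    have : Y * Cᴴ = Uᴴ * X * U := by
      rw [hCH, hY, show Uᴴ * X * V * (Vᴴ * U) = Uᴴ * X * (V * Vᴴ) * U by
        simp only [Matrix.mul_assoc], hV, Matrix.mul_one]
    rw [this, hρ, Matrix.mul_assoc, Matrix.mul_assoc, Matrix.trace_mul_comm]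
    simp only [Matrix.mul_assoc]
  have e2 : (ρ * (X * X)).trace = (Matrix.diagonal (fun i => (l i : ℂ)) * (Y * Yᴴ)).trace := by
    have : Y * Yᴴ = Uᴴ * (X * X) * U := by
      rw [hYH, hY, show Uᴴ * X * V * (Vᴴ * X * U) = Uᴴ * X * (V * Vᴴ) * X * U by
        simp only [Matrix.mul_assoc], hV, Matrix.mul_one]
      simp only [Matrix.mul_assoc]
    rw [this, hρ, Matrix.mul_assoc, Matrix.mul_assoc, Matrix.trace_mul_comm]
    simp only [Matrix.mul_assoc]
  have e3 : (σ * (X * X)).trace = (Matrix.diagonal (fun i => (m i : ℂ)) * (Yᴴ * Y)).trace := by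
    have : Yᴴ * Y = Vᴴ * (X * X) * V := by
      rw [hYH, hY, show Vᴴ * X * U * (Uᴴ * X * V) = Vᴴ * X * (U * Uᴴ) * X * V by
        simp only [Matrix.mul_assoc], hU, Matrix.mul_one]
      simp only [Matrix.mul_assoc]
    rw [this, hσ, Matrix.mul_assoc, Matrix.mul_assoc, Matrix.trace_mul_comm]
    simp only [Matrix.mul_assoc]
  have f1 : (ρ * X).trace.re = ∑ i, ∑ j, l i * (Y i j * star (C i j)).re := by
    rw [e1]
    simp only [Matrix.trace, Matrix.diag, Matrix.diagonal_mul]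
    simp only [Matrix.mul_apply, Matrix.conjTranspose_apply,
      Complex.re_sum, Complex.re_ofReal_mul, Finset.mul_sum]
  have f2 : (ρ * (X * X)).trace.re = ∑ i, ∑ j, l i * Complex.normSq (Y i j) := by
    rw [e2]
    simp only [Matrix.trace, Matrix.diag, Matrix.diagonal_mul]
    simp only [Matrix.mul_apply, Matrix.conjTranspose_apply,
      Complex.re_sum, Complex.re_ofReal_mul, Finset.mul_sum, Complex.star_def, Complex.mul_conj, Complex.ofReal_re]
  have f3 : (σ * (X * X)).trace.re = ∑ i, ∑ j, m j * Complex.normSq (Y i j) := by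
    rw [e3, Finset.sum_comm]
    simp only [Matrix.trace, Matrix.diag, Matrix.diagonal_mul]
    simp only [Matrix.mul_apply, Matrix.conjTranspose_apply,
      Complex.re_sum, Complex.re_ofReal_mul, Finset.mul_sum, Complex.star_def, mul_comm (starRingEnd ℂ _), Complex.mul_conj, Complex.ofReal_re]
  rw [f1, f2, f3, Fintype.sum_prod_type]
  simp only [Finset.mul_sum, ← Finset.sum_sub_distrib]
  exact Finset.sum_le_sum fun i _ => Finset.sum_le_sum fun j _ =>
    cplx_ineq _ _ _ (hl i) (hm j) ht _ _

open scoped MatrixOrder in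
lemma trace_mul_nonneg' (ρ E : Matrix n n ℂ) (hρ : ρ.PosSemidef) (hE : E.PosSemidef) :
    0 ≤ (ρ * E).trace.re := by
  obtain ⟨A, rfl⟩ := CStarAlgebra.nonneg_iff_eq_star_mul_self.mp hρ.nonneg
  rw [Matrix.star_eq_conjTranspose, Matrix.mul_assoc, Matrix.trace_mul_comm]
  exact (Complex.le_def.mp (hE.mul_mul_conjTranspose_same A).trace_nonneg).1

lemma kadison {B : Type*} [Fintype B] (ρ : Matrix n n ℂ) (hρ : ρ.PosSemidef)
    (E : B → Matrix n n ℂ) (hE : ∀ b, (E b).PosSemidef) (hEs : ∑ b, E b = 1) (x : B → ℝ) :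
    (ρ * ((∑ b, (x b : ℂ) • E b) * (∑ b, (x b : ℂ) • E b))).trace.re
      ≤ ∑ b, x b ^ 2 * (ρ * E b).trace.re := by
  set X := ∑ b, (x b : ℂ) • E b with hX
  have hXH : Xᴴ = X := by
    simp [hX, Matrix.conjTranspose_sum, Matrix.conjTranspose_smul, fun b => (hE b).1.eq]
  have h1 : ∀ b, 0 ≤ (ρ * (((x b : ℂ) • 1 - X) * E b * ((x b : ℂ) • 1 - X))).trace.re := by
    intro b
    apply trace_mul_nonneg' _ _ hρ
    have := (hE b).mul_mul_conjTranspose_same ((x b : ℂ) • 1 - X)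
    simpa [Matrix.conjTranspose_sub, Matrix.conjTranspose_smul, hXH] using this
  have h2 : ∑ b, (((x b : ℂ) • 1 - X) * E b * ((x b : ℂ) • 1 - X))
      = ∑ b, ((x b ^ 2 : ℝ) : ℂ) • E b - X * X := by
    have h3 : ∀ b, (((x b : ℂ) • 1 - X) * E b * ((x b : ℂ) • 1 - X))
       = ((x b ^ 2 : ℝ) : ℂ) • E b - X * ((x b : ℂ) • E b) - ((x b : ℂ) • E b) * X + X * E b * X := by
      intro b
      simp only [sub_mul, mul_sub, Matrix.smul_mul, Matrix.mul_smul, Matrix.one_mul, Matrix.mul_one, smul_smul]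
      push_cast
      rw [pow_two]; abel
    simp only [h3, Finset.sum_add_distrib, Finset.sum_sub_distrib, ← Finset.mul_sum, ← Finset.sum_mul, hEs, ← hX]
    simp
  have h4 := Finset.sum_nonneg fun b (_ : b ∈ Finset.univ) => h1 b
  rw [← Complex.re_sum, ← Matrix.trace_sum, ← Finset.mul_sum, h2, mul_sub, Matrix.trace_sub, Finset.mul_sum,
    Matrix.trace_sum, Complex.sub_re, Complex.re_sum] at h4
  simp only [Matrix.mul_smul, Matrix.trace_smul, smul_eq_mul, Complex.re_ofReal_mul] at h4
  linarith

lemma povm_ineq {B : Type*} [Fintype B] (ρ σ U V : Matrix n n ℂ) (l m : n → ℝ)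
    (hl : ∀ i, 0 ≤ l i) (hm : ∀ i, 0 ≤ m i)
    (hU : U * Uᴴ = 1) (hV : V * Vᴴ = 1) (hρ0 : ρ.PosSemidef) (hσ0 : σ.PosSemidef)
    (hρ : ρ = U * Matrix.diagonal (fun i => (l i : ℂ)) * Uᴴ)
    (hσ : σ = V * Matrix.diagonal (fun i => (m i : ℂ)) * Vᴴ)
    (E : B → Matrix n n ℂ) (hE : ∀ b, (E b).PosSemidef) (hEs : ∑ b, E b = 1)
    (t : ℝ) (ht : 0 < t) :
    ∑ b, (ρ * E b).trace.re ^ 2 / ((σ * E b).trace.re + t * (ρ * E b).trace.re)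
     ≤ ∑ ij : n × n, Complex.normSq ((Uᴴ * V) ij.1 ij.2) * (l ij.1 ^ 2 / (m ij.2 + t * l ij.1)) := by
  set P := fun b => (ρ * E b).trace.re with hP
  set Q := fun b => (σ * E b).trace.re with hQ
  set x : B → ℝ := fun b => P b / (Q b + t * P b) with hx
  set X := ∑ b, (x b : ℂ) • E b with hX
  have hXH : Xᴴ = X := by
    simp [hX, Matrix.conjTranspose_sum, Matrix.conjTranspose_smul, fun b => (hE b).1.eq]
  have h1 := key ρ σ X U V l m hl hm hU hV hρ hσ hXH t ht
  have h2 := kadison ρ hρ0 E hE hEs x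
  have h3 := kadison σ hσ0 E hE hEs x
  have h4 : (ρ * X).trace.re = ∑ b, x b * P b := by
    rw [hX, Finset.mul_sum, Matrix.trace_sum, Complex.re_sum]
    simp only [Matrix.mul_smul, Matrix.trace_smul, smul_eq_mul, Complex.re_ofReal_mul, hP]
  have h5 : ∑ b, P b ^ 2 / (Q b + t * P b)
      = 2 * (∑ b, x b * P b) - ∑ b, x b ^ 2 * Q b - t * ∑ b, x b ^ 2 * P b := by
    simp only [Finset.mul_sum, ← Finset.sum_sub_distrib]
    refine Finset.sum_congr rfl fun b _ => ?_
    simp only [hx]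
    by_cases h : Q b + t * P b = 0
    · simp [h]
    · have e : Q b = (Q b + t * P b) - t * P b := by ring
      generalize Q b + t * P b = D at h e
      rw [e]
      field_simp
      ring
  have h6 := mul_le_mul_of_nonneg_left h2 ht.le
  change ∑ b, P b ^ 2 / (Q b + t * P b) ≤ _
  rw [h5]
  rw [h4] at h1
  linarith

lemma spec (M : Matrix n n ℂ) (h : M.IsHermitian) :
    M = (h.eigenvectorUnitary : Matrix n n ℂ) * Matrix.diagonal (fun i => (h.eigenvalues i : ℂ))
      * (h.eigenvectorUnitary : Matrix n n ℂ)ᴴ := by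
  conv_lhs => rw [h.spectral_theorem, Unitary.conjStarAlgAut_apply]
  rfl

lemma row_sum (C : Matrix n n ℂ) (h : C * Cᴴ = 1) (i : n) :
    ∑ j, Complex.normSq (C i j) = 1 := by
  have := congrArg Complex.re (congrFun (congrFun h i) i)
  simpa only [Matrix.mul_apply, Matrix.conjTranspose_apply, Complex.star_def, Complex.mul_conj,
    Complex.re_sum, Complex.ofReal_re, Matrix.one_apply_eq, Complex.one_re] using this

lemma col_sum (ρ U V : Matrix n n ℂ) (l : n → ℝ)
    (hρ : ρ = U * Matrix.diagonal (fun i => (l i : ℂ)) * Uᴴ) (j : n) :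
    ∑ i, Complex.normSq ((Uᴴ * V) i j) * l i = ((Vᴴ * ρ * V) j j).re := by
  have : Vᴴ * ρ * V = (Uᴴ * V)ᴴ * (Matrix.diagonal (fun i => (l i : ℂ)) * (Uᴴ * V)) := by
    rw [hρ]; simp only [Matrix.conjTranspose_mul, Matrix.conjTranspose_conjTranspose, Matrix.mul_assoc]
  rw [this]
  generalize Uᴴ * V = C
  rw [Matrix.mul_apply, Complex.re_sum]
  refine Finset.sum_congr rfl fun i _ => ?_
  rw [Matrix.diagonal_mul, Matrix.conjTranspose_apply, mul_left_comm, mul_comm (star _), Complex.star_def,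
    Complex.mul_conj, Complex.re_ofReal_mul, Complex.ofReal_re, mul_comm]

end helpers

lemma shannon_id {A B : Type*} [Fintype A] [Fintype B] (p : A → ℝ) (P : A → B → ℝ)
    (hP : ∀ a, ∑ b, P a b = 1) :
    shannon p + shannon (fun b => ∑ a, p a * P a b) - shannon (fun ab : A × B => p ab.1 * P ab.1 ab.2)
    = (∑ a, p a * ∑ b, P a b * (Real.log (P a b) - Real.log (∑ a, p a * P a b))) / Real.log 2 := by
  have h1 : ∑ a, ∑ b, p a * P a b * Real.log (p a * P a b)
      = ∑ a, p a * Real.log (p a) + ∑ a, ∑ b, p a * P a b * Real.log (P a b) := by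
    rw [← Finset.sum_add_distrib]
    refine Finset.sum_congr rfl fun a _ => ?_
    have : p a * Real.log (p a) = ∑ b, p a * P a b * Real.log (p a) := by
      rw [← Finset.sum_mul, ← Finset.mul_sum, hP, mul_one]
    rw [this, ← Finset.sum_add_distrib]
    refine Finset.sum_congr rfl fun b _ => ?_
    by_cases h : p a = 0
    · simp [h]
    by_cases h' : P a b = 0
    · simp [h']
    rw [Real.log_mul h h']; ring
  have h2 : ∑ b, (∑ a, p a * P a b) * Real.log (∑ a, p a * P a b)
      = ∑ a, ∑ b, p a * P a b * Real.log (∑ a, p a * P a b) := by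
    rw [Finset.sum_comm]
    simp only [Finset.sum_mul]
  simp only [shannon, Real.logb, ← mul_div_assoc, ← Finset.sum_div, Fintype.sum_prod_type]
  rw [h1, h2]
  simp only [mul_sub, Finset.mul_sum, Finset.sum_sub_distrib, mul_assoc]
  ring

lemma vn_id {A : Type*} [Fintype A] {d : ℕ} (p : A → ℝ)
    (W : A → Fin d → Fin d → ℝ) (l : A → Fin d → ℝ) (m : Fin d → ℝ)
    (hrow : ∀ a i, ∑ j, W a i j = 1) (hcol : ∀ j, ∑ a, p a * ∑ i, W a i j * l a i = m j) :
    (-∑ j, m j * Real.logb 2 (m j)) - ∑ a, p a * (-∑ i, l a i * Real.logb 2 (l a i))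
    = (∑ a, p a * ∑ ij : Fin d × Fin d, W a ij.1 ij.2 * l a ij.1
        * (Real.log (l a ij.1) - Real.log (m ij.2))) / Real.log 2 := by
  have h1 : ∀ a, ∑ i, l a i * Real.log (l a i) = ∑ i, ∑ j, W a i j * l a i * Real.log (l a i) := by
    intro a
    refine Finset.sum_congr rfl fun i _ => ?_
    rw [← Finset.sum_mul, ← Finset.sum_mul, hrow, one_mul]
  have h2 : ∑ j, m j * Real.log (m j)
      = ∑ a, p a * ∑ i, ∑ j, W a i j * l a i * Real.log (m j) := by
    have : ∀ j, m j * Real.log (m j) = ∑ a, p a * ∑ i, W a i j * l a i * Real.log (m j) := by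
      intro j
      conv_lhs => rw [← hcol j]
      rw [Finset.sum_mul, hcol j]
      simp only [mul_assoc, Finset.sum_mul]
    rw [Finset.sum_congr rfl fun j _ => this j, Finset.sum_comm]
    refine Finset.sum_congr rfl fun a _ => ?_
    rw [← Finset.mul_sum, Finset.sum_comm]
  simp only [Real.logb, ← mul_div_assoc, ← Finset.sum_div, Fintype.sum_prod_type, mul_neg,
    Finset.sum_neg_distrib]
  rw [h2]
  simp only [h1, mul_sub, Finset.sum_sub_distrib]
  ring

/-- The Holevo bound: for an ensemble `(pₐ, ρₐ)` and a POVM `(E_b)`, the mutual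
information `H(A:B) = H(P_A) + H(P_B) − H(P)` of the joint outcome distribution
`P(a,b) = pₐ Tr(ρₐ E_b)` is bounded by `S(ρ) − Σₐ pₐ S(ρₐ)` where `ρ = Σₐ pₐ ρₐ`. -/
theorem stmt4 (d : ℕ) (A B : Type*) [Fintype A] [Fintype B]
    (p : A → ℝ) (hp0 : ∀ a, 0 ≤ p a) (hp1 : ∑ a, p a = 1)
    (ρ : A → Matrix (Fin d) (Fin d) ℂ) (hρ : ∀ a, IsDensity (ρ a))
    (E : B → Matrix (Fin d) (Fin d) ℂ) (hE : ∀ b, (E b).PosSemidef)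
    (hEsum : ∑ b, E b = 1) :
    shannon p + shannon (fun b => ∑ a, p a * ((ρ a * E b).trace.re))
        - shannon (fun ab : A × B => p ab.1 * ((ρ ab.1 * E ab.2).trace.re))
      ≤ vnEntropy (∑ a, (p a : ℂ) • ρ a) - ∑ a, p a * vnEntropy (ρ a) := by
  classical
  set σ := ∑ a, (p a : ℂ) • ρ a with hσ
  have hσ0 : σ.PosSemidef := by
    apply Matrix.posSemidef_sum
    intro a _
    exact (hρ a).1.smul (by exact_mod_cast hp0 a)
  have hh : ∀ a, (ρ a).IsHermitian := fun a => (hρ a).1.1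
  have hσh : σ.IsHermitian := hσ0.1
  have hvn : ∀ a, vnEntropy (ρ a) = -∑ i, (hh a).eigenvalues i * Real.logb 2 ((hh a).eigenvalues i) :=
    fun a => by rw [vnEntropy, dif_pos (hh a)]
  have hvs : vnEntropy σ = -∑ i, hσh.eigenvalues i * Real.logb 2 (hσh.eigenvalues i) := by
    rw [vnEntropy, dif_pos hσh]
  set U : A → Matrix (Fin d) (Fin d) ℂ := fun a => ((hh a).eigenvectorUnitary : Matrix (Fin d) (Fin d) ℂ) with hU
  set V : Matrix (Fin d) (Fin d) ℂ := (hσh.eigenvectorUnitary : Matrix (Fin d) (Fin d) ℂ) with hV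
  have hUU : ∀ a, U a * (U a)ᴴ = 1 := fun a => Unitary.coe_mul_star_self (hh a).eigenvectorUnitary
  have hUU' : ∀ a, (U a)ᴴ * U a = 1 := fun a => Unitary.coe_star_mul_self (hh a).eigenvectorUnitary
  have hVV : V * Vᴴ = 1 := Unitary.coe_mul_star_self hσh.eigenvectorUnitary
  have hVV' : Vᴴ * V = 1 := Unitary.coe_star_mul_self hσh.eigenvectorUnitary
  have hl : ∀ a i, 0 ≤ (hh a).eigenvalues i := fun a => (hρ a).1.eigenvalues_nonneg
  have hm : ∀ i, 0 ≤ hσh.eigenvalues i := hσ0.eigenvalues_nonneg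
  have sρ : ∀ a, ρ a = U a * Matrix.diagonal (fun i => ((hh a).eigenvalues i : ℂ)) * (U a)ᴴ :=
    fun a => spec _ (hh a)
  have sσ : σ = V * Matrix.diagonal (fun i => (hσh.eigenvalues i : ℂ)) * Vᴴ := spec _ hσh
  have hP1 : ∀ a, ∑ b, (ρ a * E b).trace.re = 1 := by
    intro a
    rw [← Complex.re_sum, ← Matrix.trace_sum, ← Finset.mul_sum, hEsum, Matrix.mul_one, (hρ a).2,
      Complex.one_re]
  have hl1 : ∀ a, ∑ i, (hh a).eigenvalues i = 1 := by
    intro a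
    have h1 := (hh a).trace_eq_sum_eigenvalues
    rw [(hρ a).2] at h1
    have h2 := congrArg Complex.re h1
    simpa using h2.symm
  have hrow : ∀ a i, ∑ j, Complex.normSq (((U a)ᴴ * V) i j) = 1 := by
    intro a i
    apply row_sum
    rw [Matrix.conjTranspose_mul, Matrix.conjTranspose_conjTranspose,
      show (U a)ᴴ * V * (Vᴴ * U a) = (U a)ᴴ * (V * Vᴴ) * U a by simp only [Matrix.mul_assoc],
      hVV, Matrix.mul_one, hUU']
  have hcol : ∀ j, ∑ a, p a * ∑ i, Complex.normSq (((U a)ᴴ * V) i j) * (hh a).eigenvalues i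
      = hσh.eigenvalues j := by
    intro j
    have h1 : Vᴴ * σ * V = Matrix.diagonal (fun i => (hσh.eigenvalues i : ℂ)) := by
      conv_lhs => rw [sσ]
      rw [show ∀ D : Matrix (Fin d) (Fin d) ℂ, Vᴴ * (V * D * Vᴴ) * V = (Vᴴ * V) * D * (Vᴴ * V) by
        intro D; simp only [Matrix.mul_assoc], hVV', Matrix.mul_one, Matrix.one_mul]
    have h2 := congrArg Complex.re (congrFun (congrFun h1 j) j)
    rw [Matrix.diagonal_apply_eq, Complex.ofReal_re] at h2
    rw [← h2, hσ, Finset.mul_sum, Finset.sum_mul, Matrix.sum_apply, Complex.re_sum]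
    refine Finset.sum_congr rfl fun a _ => ?_
    rw [col_sum (ρ a) (U a) V _ (sρ a) j, Matrix.mul_smul, Matrix.smul_mul, Matrix.smul_apply,
      smul_eq_mul, Complex.re_ofReal_mul]
  have hQ : ∀ b, (σ * E b).trace.re = ∑ a, p a * (ρ a * E b).trace.re := by
    intro b
    rw [hσ, Finset.sum_mul, Matrix.trace_sum, Complex.re_sum]
    simp only [Matrix.smul_mul, Matrix.trace_smul, smul_eq_mul, Complex.re_ofReal_mul]
  have hPn : ∀ a b, 0 ≤ (ρ a * E b).trace.re := fun a b => trace_mul_nonneg' _ _ (hρ a).1 (hE b)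
  rw [shannon_id p (fun a b => (ρ a * E b).trace.re) hP1, hvs]
  simp only [hvn]
  rw [vn_id p (fun a i j => Complex.normSq (((U a)ᴴ * V) i j)) (fun a => (hh a).eigenvalues)
    hσh.eigenvalues hrow hcol]
  refine div_le_div_of_nonneg_right ?_ (Real.log_nonneg one_le_two)
  refine Finset.sum_le_sum fun a _ => ?_
  rcases (hp0 a).eq_or_lt with hpa | hpa
  · simp [← hpa]
  refine mul_le_mul_of_nonneg_left ?_ hpa.le
  simp only [← hQ]
  refine scalar_ineq (fun ij : Fin d × Fin d => Complex.normSq (((U a)ᴴ * V) ij.1 ij.2))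
    (fun ij => (hh a).eigenvalues ij.1) (fun ij => hσh.eigenvalues ij.2)
    (fun b => (ρ a * E b).trace.re) (fun b => (σ * E b).trace.re)
    (fun _ => hl a _) (fun _ => hm _) ?_ (hPn a)
    (fun b => trace_mul_nonneg' _ _ hσ0 (hE b)) ?_ ?_ ?_
  · rintro ⟨i, j⟩ h0
    dsimp only at h0 ⊢
    rw [← hcol j] at h0
    have hn : ∀ a i, 0 ≤ Complex.normSq (((U a)ᴴ * V) i j) * (hh a).eigenvalues i :=
      fun a i => mul_nonneg (Complex.normSq_nonneg _) (hl a i)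
    have h1 := (Finset.sum_eq_zero_iff_of_nonneg fun a _ =>
      mul_nonneg (hp0 a) (Finset.sum_nonneg fun i _ => hn a i)).mp h0 a (Finset.mem_univ _)
    have h2 := (mul_eq_zero.mp h1).resolve_left hpa.ne'
    exact (Finset.sum_eq_zero_iff_of_nonneg fun i _ => hn a i).mp h2 i (Finset.mem_univ _)
  · intro b h0
    rw [hQ] at h0
    have h1 := (Finset.sum_eq_zero_iff_of_nonneg fun a _ =>
      mul_nonneg (hp0 a) (hPn a b)).mp h0 a (Finset.mem_univ _)
    exact (mul_eq_zero.mp h1).resolve_left hpa.ne'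
  · rw [hP1, Fintype.sum_prod_type]
    simp only [← Finset.sum_mul, hrow, one_mul, hl1]
  · intro t ht
    exact povm_ineq (ρ a) σ (U a) V _ _ (hl a) hm (hUU a) hVV (hρ a).1 hσ0 (sρ a) sσ E hE hEsum t ht
end
end

section
/- If ρ is a separable density matrix on ℂ^m ⊗ ℂ^n, then its partial transpose ρ^{T₂} is again a density matrix; in particular ρ^{T₂} is positive semidefinite (the Peres necessary condition for separability: a separable state remains positive under partial transposition). -/
open scoped ComplexOrder Kronecker

noncomputable section

/-- A separable state: a finite convex combination of tensor products of density
matrices; a non-separable density matrix is entangled. -/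
def Separable {m n : ℕ} (ρ : Matrix (Fin m × Fin n) (Fin m × Fin n) ℂ) : Prop :=
  ∃ (k : ℕ) (lam : Fin k → ℝ) (ρ1 : Fin k → Matrix (Fin m) (Fin m) ℂ)
    (ρ2 : Fin k → Matrix (Fin n) (Fin n) ℂ),
    (∀ i, 0 ≤ lam i) ∧ (∑ i, lam i = 1) ∧
    (∀ i, IsDensity (ρ1 i)) ∧ (∀ i, IsDensity (ρ2 i)) ∧
    ρ = ∑ i, (lam i : ℂ) • (ρ1 i ⊗ₖ ρ2 i)

/-- The partial transpose on the second tensor factor: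
`(ρ^{T₂})_{(i,k),(j,l)} = ρ_{(i,l),(j,k)}`. -/
def ptranspose2 {m n : ℕ} (ρ : Matrix (Fin m × Fin n) (Fin m × Fin n) ℂ) :
    Matrix (Fin m × Fin n) (Fin m × Fin n) ℂ :=
  Matrix.of fun p q => ρ (p.1, q.2) (q.1, p.2)

/-- Peres's necessary condition for separability: the partial transpose of a separable
density matrix is again a density matrix; in particular it is positive semidefinite. -/
theorem stmt9 (m n : ℕ) (ρ : Matrix (Fin m × Fin n) (Fin m × Fin n) ℂ)
    (hρ : IsDensity ρ) (hsep : Separable ρ) :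
    IsDensity (ptranspose2 ρ) ∧ (ptranspose2 ρ).PosSemidef := by
  have hpsd : (ptranspose2 ρ).PosSemidef := by
    obtain ⟨k, lam, ρ1, ρ2, hl, -, h1, h2, rfl⟩ := hsep
    have key : ptranspose2 (∑ i, (lam i : ℂ) • (ρ1 i ⊗ₖ ρ2 i))
        = ∑ i, (lam i : ℂ) • (ρ1 i ⊗ₖ (ρ2 i).transpose) := by
      ext p q
      simp [ptranspose2, Matrix.sum_apply]
    rw [key]
    refine Matrix.posSemidef_sum _ fun i _ => ?_
    exact ((h1 i).1.kronecker (h2 i).1.transpose).smul (by exact_mod_cast hl i)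
  refine ⟨⟨hpsd, ?_⟩, hpsd⟩
  rw [← hρ.2]
  rfl
end
end

section
/- A density matrix ρ on ℂ^m ⊗ ℂ^n is separable if and only if Tr(Aρ) ≥ 0 for every Hermitian mn×mn matrix A satisfying Tr(A(P ⊗ Q)) ≥ 0 for all orthogonal projections P on ℂ^m and Q on ℂ^n. Equivalently: ρ is entangled if and only if there exists an entanglement witness for it, i.e., a Hermitian matrix A with nonnegative expectation value Tr(Aσ) ≥ 0 on every separable density matrix σ but Tr(Aρ) < 0 (Horodecki, via the separating-hyperplane theorem). -/
open scoped ComplexOrder Kronecker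

noncomputable section

/-- An orthogonal projection: Hermitian and idempotent. -/
def IsProjection {ι : Type*} [Fintype ι] (P : Matrix ι ι ℂ) : Prop :=
  P.IsHermitian ∧ P * P = P

open Matrix in
/-- The convex hull of a compact set in finite dimension is compact (Caratheodory). -/
theorem aux_compact_hull {E : Type*} [AddCommGroup E] [Module ℝ E] [TopologicalSpace E]
    [ContinuousAdd E] [ContinuousSMul ℝ E] [FiniteDimensional ℝ E] {s : Set E}
    (hs : IsCompact s) : IsCompact (convexHull ℝ s) := by
  rcases s.eq_empty_or_nonempty with rfl | ⟨s0, hs0⟩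
  · simp
  let N := Module.finrank ℝ E + 1
  let F : (Fin N → ℝ) × (Fin N → E) → E := fun p => ∑ j, p.1 j • p.2 j
  have hF : Continuous F := by fun_prop
  have hK : IsCompact ((stdSimplex ℝ (Fin N)) ×ˢ (Set.univ.pi fun _ : Fin N => s)) :=
    (isCompact_stdSimplex ℝ _).prod (isCompact_univ_pi fun _ => hs)
  have : convexHull ℝ s = F '' ((stdSimplex ℝ (Fin N)) ×ˢ (Set.univ.pi fun _ : Fin N => s)) := by
    apply Set.Subset.antisymm
    · intro x hx
      obtain ⟨ι, _, z, w, hz, hai, hw, hw1, hx⟩ := eq_pos_convex_span_of_mem_convexHull hx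
      have hc : Fintype.card ι ≤ Fintype.card (Fin N) := by
        rw [Fintype.card_fin]
        exact hai.card_le_finrank_succ.trans (Nat.succ_le_succ (Submodule.finrank_le _))
      obtain ⟨e⟩ := Function.Embedding.nonempty_of_card_le hc
      have h1 : ∀ i, Function.extend e w 0 (e i) = w i := fun i => e.injective.extend_apply _ _ _
      have h2 : ∀ i, Function.extend e z (fun _ => s0) (e i) = z i :=
        fun i => e.injective.extend_apply _ _ _
      have h3 : ∀ j, j ∉ Set.range e → Function.extend e w 0 j = 0 := fun j hj =>
        Function.extend_apply' _ _ _ (by simpa using hj)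
      refine ⟨(Function.extend e w 0, Function.extend e z (fun _ => s0)), ⟨⟨?_, ?_⟩, ?_⟩, ?_⟩
      · intro j
        by_cases hj : j ∈ Set.range e
        · obtain ⟨i, rfl⟩ := hj
          simpa [h1] using (hw i).le
        · exact (h3 j hj).ge
      · rw [← hw1]
        exact (Fintype.sum_of_injective e e.injective _ _ h3 (fun i => (h1 i).symm)).symm
      · intro j _
        by_cases hj : j ∈ Set.range e
        · obtain ⟨i, rfl⟩ := hj
          simp only [h2]
          exact hz ⟨i, rfl⟩
        · have : Function.extend e z (fun _ => s0) j = s0 :=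
            Function.extend_apply' _ _ _ (by simpa using hj)
          simpa [this] using hs0
      · rw [← hx]
        refine (Fintype.sum_of_injective e e.injective _ _ ?_ ?_).symm
        · intro j hj
          simp [h3 j hj]
        · intro i
          simp [h1, h2]
    · rintro _ ⟨⟨w, z⟩, ⟨⟨hw, hw1⟩, hz⟩, rfl⟩
      exact mem_convexHull_of_exists_fintype w z hw hw1 (fun i => hz i trivial) rfl
  rw [this]
  exact hK.image hF

open Matrix in
/-- The rank-one product operator. -/
def auxPure {m n : ℕ} (v : Fin m → ℂ) (w : Fin n → ℂ) :
    Matrix (Fin m × Fin n) (Fin m × Fin n) ℂ :=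
  vecMulVec v (star v) ⊗ₖ vecMulVec w (star w)

open Matrix in
theorem aux_trace_unit {m : ℕ} (v : EuclideanSpace ℂ (Fin m)) :
    (vecMulVec v.ofLp (star v.ofLp)).trace = ((‖v‖ ^ 2 : ℝ) : ℂ) := by
  rw [trace_vecMulVec, EuclideanSpace.norm_sq_eq]
  simp [dotProduct, Complex.mul_conj, Complex.normSq_eq_norm_sq]

open Matrix in
theorem aux_density {m : ℕ} (v : EuclideanSpace ℂ (Fin m)) (hv : ‖v‖ = 1) :
    IsDensity (vecMulVec v.ofLp (star v.ofLp)) :=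
  ⟨posSemidef_vecMulVec_self_star _, by rw [aux_trace_unit, hv]; simp⟩

open Matrix in
theorem aux_proj {m : ℕ} (v : EuclideanSpace ℂ (Fin m)) (hv : ‖v‖ = 1) :
    IsProjection (vecMulVec v.ofLp (star v.ofLp)) := by
  refine ⟨(posSemidef_vecMulVec_self_star _).1, ?_⟩
  have h := aux_trace_unit v
  rw [trace_vecMulVec, dotProduct_comm] at h
  rw [vecMulVec_mul_vecMulVec, h]
  simp [hv]

open Matrix in
/-- Every vector is a real multiple of a unit vector, or is zero. -/
theorem aux_scale {m : ℕ} (v : Fin m → ℂ) :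
    ∃ c : ℝ, 0 ≤ c ∧ (c = 0 ∧ vecMulVec v (star v) = 0 ∨
      ∃ u : EuclideanSpace ℂ (Fin m), ‖u‖ = 1 ∧
        vecMulVec v (star v) = (c : ℂ) • vecMulVec u.ofLp (star u.ofLp)) := by
  by_cases hv : v = 0
  · exact ⟨0, le_rfl, Or.inl ⟨rfl, by simp [hv]⟩⟩
  · have h0 : WithLp.toLp 2 v ≠ 0 := by simpa using hv
    have hn := norm_ne_zero_iff.2 h0
    refine ⟨‖WithLp.toLp 2 v‖ ^ 2, by positivity, Or.inr
      ⟨((‖WithLp.toLp 2 v‖⁻¹ : ℝ) : ℂ) • WithLp.toLp 2 v, ?_, ?_⟩⟩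
    · rw [norm_smul]
      simp [hn]
    · have hn' : ((‖WithLp.toLp 2 v‖ : ℝ) : ℂ) ≠ 0 := by exact_mod_cast hn
      ext i j
      simp only [vecMulVec_apply, Matrix.smul_apply, WithLp.ofLp_smul, Pi.smul_apply, Pi.star_apply,
        smul_eq_mul, star_mul', RCLike.star_def, Complex.conj_ofReal]
      push_cast
      field_simp

open Matrix in
/-- Nonnegativity on unit product vectors extends to all product vectors. -/
theorem aux_unit_all {m n : ℕ} (A : Matrix (Fin m × Fin n) (Fin m × Fin n) ℂ)
    (h : ∀ (v : EuclideanSpace ℂ (Fin m)) (w : EuclideanSpace ℂ (Fin n)), ‖v‖ = 1 → ‖w‖ = 1 →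
      0 ≤ ((A * auxPure v.ofLp w.ofLp).trace).re) (v : Fin m → ℂ) (w : Fin n → ℂ) :
    0 ≤ ((A * auxPure v w).trace).re := by
  obtain ⟨c, hc, h1⟩ := aux_scale v
  obtain ⟨d, hd, h2⟩ := aux_scale w
  unfold auxPure at h ⊢
  rcases h1 with ⟨_, h1⟩ | ⟨u, hu, h1⟩
  · simp [h1]
  rcases h2 with ⟨_, h2⟩ | ⟨u', hu', h2⟩
  · simp [h2]
  rw [h1, h2, smul_kronecker, kronecker_smul, Matrix.mul_smul, Matrix.mul_smul, trace_smul,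
    trace_smul, smul_eq_mul, smul_eq_mul, Complex.re_ofReal_mul, Complex.re_ofReal_mul]
  exact mul_nonneg hc (mul_nonneg hd (h u u' hu hu'))

open Matrix in
theorem aux_psd {m n : ℕ} (A : Matrix (Fin m × Fin n) (Fin m × Fin n) ℂ)
    (h : ∀ (v : Fin m → ℂ) (w : Fin n → ℂ), 0 ≤ ((A * auxPure v w).trace).re)
    {P : Matrix (Fin m) (Fin m) ℂ} {Q : Matrix (Fin n) (Fin n) ℂ}
    (hP : P.PosSemidef) (hQ : Q.PosSemidef) : 0 ≤ ((A * (P ⊗ₖ Q)).trace).re := by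
  obtain ⟨k, v, rfl⟩ := posSemidef_iff_eq_sum_vecMulVec.1 hP
  obtain ⟨l, w, rfl⟩ := posSemidef_iff_eq_sum_vecMulVec.1 hQ
  have : (∑ i, vecMulVec (v i) (star (v i))) ⊗ₖ (∑ j, vecMulVec (w j) (star (w j)))
      = ∑ i, ∑ j, auxPure (v i) (w j) := by
    ext ⟨a, b⟩ ⟨c, d⟩
    simp only [auxPure, kroneckerMap_apply, Matrix.sum_apply, Finset.sum_mul_sum]
  rw [this]
  simp only [Finset.mul_sum, trace_sum, Complex.re_sum]
  exact Finset.sum_nonneg fun i _ => Finset.sum_nonneg fun j _ => h _ _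

open Matrix in
theorem aux_sep {m n : ℕ} (A : Matrix (Fin m × Fin n) (Fin m × Fin n) ℂ)
    (h : ∀ (v : Fin m → ℂ) (w : Fin n → ℂ), 0 ≤ ((A * auxPure v w).trace).re)
    {σ : Matrix (Fin m × Fin n) (Fin m × Fin n) ℂ} (hσ : Separable σ) :
    0 ≤ ((A * σ).trace).re := by
  obtain ⟨k, lam, ρ1, ρ2, hl, -, h1, h2, rfl⟩ := hσ
  simp only [Finset.mul_sum, trace_sum, Complex.re_sum, Matrix.mul_smul, trace_smul, smul_eq_mul,
    Complex.re_ofReal_mul]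
  exact Finset.sum_nonneg fun i _ => mul_nonneg (hl i) (aux_psd A h (h1 i).1 (h2 i).1)

open Matrix in
theorem aux_repr {ι : Type*} [Fintype ι] [DecidableEq ι] (f : Matrix ι ι ℂ →ₗ[ℝ] ℝ) :
    ∃ A : Matrix ι ι ℂ, ∀ X, ((A * X).trace).re = f X := by
  refine ⟨of fun j i => (f (single i j 1) : ℂ) - Complex.I * f (single i j Complex.I),
    fun X => ?_⟩
  have key : ∀ i j, f (single i j (X i j)) =
      (X i j).re * f (single i j 1) + (X i j).im * f (single i j Complex.I) := by
    intro i j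
    rw [← smul_eq_mul, ← smul_eq_mul, ← map_smul, ← map_smul, ← map_add, smul_single, smul_single,
      ← single_add]
    congr 2
    apply Complex.ext <;> simp
  conv_rhs => rw [matrix_eq_sum_single X]
  simp only [map_sum, key]
  rw [Finset.sum_comm]
  simp only [trace, diag, mul_apply, Complex.re_sum, of_apply]
  refine Finset.sum_congr rfl fun i _ => Finset.sum_congr rfl fun j _ => ?_
  simp
  ring

open Matrix in
theorem aux_herm {ι : Type*} [Fintype ι] [DecidableEq ι] (A : Matrix ι ι ℂ) (u : ℝ) :
    ∃ B : Matrix ι ι ℂ, B.IsHermitian ∧ ∀ X : Matrix ι ι ℂ, IsDensity X →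
      ((B * X).trace).re = ((A * X).trace).re - u := by
  refine ⟨((1 / 2 : ℝ) : ℂ) • (A + Aᴴ) - (u : ℂ) • 1, ?_, ?_⟩
  · unfold Matrix.IsHermitian
    simp only [conjTranspose_sub, conjTranspose_smul, conjTranspose_add,
      conjTranspose_conjTranspose, conjTranspose_one, RCLike.star_def, Complex.conj_ofReal]
    rw [add_comm]
  · intro X hX
    have h : (Aᴴ * X).trace = star (A * X).trace := by
      rw [← trace_conjTranspose, conjTranspose_mul, hX.1.1.eq, trace_mul_comm]
    rw [sub_mul, trace_sub, smul_mul, smul_mul, add_mul, trace_smul, trace_smul, trace_add, h,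
      one_mul, hX.2, smul_eq_mul, smul_eq_mul, Complex.sub_re, Complex.re_ofReal_mul,
      Complex.re_ofReal_mul]
    simp
    ring

open Matrix in
theorem aux_main {m n : ℕ} (ρ : Matrix (Fin m × Fin n) (Fin m × Fin n) ℂ)
    (hρ : IsDensity ρ) (hs : ¬ Separable ρ) :
    ∃ A : Matrix (Fin m × Fin n) (Fin m × Fin n) ℂ, A.IsHermitian ∧
      (∀ (v : Fin m → ℂ) (w : Fin n → ℂ), 0 ≤ ((A * auxPure v w).trace).re) ∧
      ((A * ρ).trace).re < 0 := by
  let G : EuclideanSpace ℂ (Fin m) × EuclideanSpace ℂ (Fin n) →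
      Matrix (Fin m × Fin n) (Fin m × Fin n) ℂ := fun p => auxPure p.1.ofLp p.2.ofLp
  have hG : Continuous G := by
    refine continuous_matrix fun i j => ?_
    simp only [G, auxPure, kroneckerMap_apply, vecMulVec_apply, Pi.star_apply]
    fun_prop
  let S := G '' (Metric.sphere 0 1 ×ˢ Metric.sphere 0 1)
  have hS : IsCompact S := ((isCompact_sphere _ _).prod (isCompact_sphere _ _)).image hG
  have hnot : ρ ∉ convexHull ℝ S := by
    intro hx
    apply hs
    obtain ⟨ι, _, w, z, hw, hw1, hz, hx⟩ := mem_convexHull_iff_exists_fintype.1 hx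
    choose p hp hpz using hz
    let e := (Fintype.equivFin ι).symm
    refine ⟨Fintype.card ι, fun i => w (e i),
      fun i => vecMulVec (p (e i)).1.ofLp (star (p (e i)).1.ofLp),
      fun i => vecMulVec (p (e i)).2.ofLp (star (p (e i)).2.ofLp), fun i => hw _, ?_, ?_, ?_, ?_⟩
    · rw [← hw1]
      exact e.sum_comp w
    · intro i
      exact aux_density _ (by simpa using (hp (e i)).1)
    · intro i
      exact aux_density _ (by simpa using (hp (e i)).2)
    · rw [← hx, ← e.sum_comp]
      refine Finset.sum_congr rfl fun i _ => ?_
      rw [← hpz]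
      ext a b
      simp [G, auxPure]
  have hcl := (aux_compact_hull hS).isClosed
  have : LocallyConvexSpace ℝ (Matrix (Fin m × Fin n) (Fin m × Fin n) ℂ) :=
    inferInstanceAs (LocallyConvexSpace ℝ (Fin m × Fin n → Fin m × Fin n → ℂ))
  obtain ⟨f, u, hfu, hf⟩ := geometric_hahn_banach_point_closed (convex_convexHull ℝ S) hcl hnot
  obtain ⟨A0, hA0⟩ := aux_repr f.toLinearMap
  obtain ⟨A, hA, hAX⟩ := aux_herm A0 u
  refine ⟨A, hA, aux_unit_all A fun v w hv hw => ?_, ?_⟩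
  · have hd : IsDensity (auxPure v.ofLp w.ofLp) := by
      refine ⟨(aux_density v hv).1.kronecker (aux_density w hw).1, ?_⟩
      rw [auxPure, trace_kronecker, (aux_density v hv).2, (aux_density w hw).2, one_mul]
    rw [hAX _ hd, hA0]
    have := hf _ (subset_convexHull ℝ S ⟨(v, w), ⟨by simpa using hv, by simpa using hw⟩, rfl⟩)
    exact sub_nonneg.2 this.le
  · rw [hAX _ hρ, hA0]
    exact sub_neg.2 hfu

/-- The Horodecki entanglement-witness characterization: `ρ` is separable iff
`Tr(Aρ) ≥ 0` for every Hermitian `A` with `Tr(A(P ⊗ Q)) ≥ 0` for all projections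
`P`, `Q`; equivalently, `ρ` is entangled iff there is an entanglement witness for it. -/
theorem stmt10 (m n : ℕ) (ρ : Matrix (Fin m × Fin n) (Fin m × Fin n) ℂ)
    (hρ : IsDensity ρ) :
    (Separable ρ ↔
      ∀ A : Matrix (Fin m × Fin n) (Fin m × Fin n) ℂ, A.IsHermitian →
        (∀ (P : Matrix (Fin m) (Fin m) ℂ) (Q : Matrix (Fin n) (Fin n) ℂ),
          IsProjection P → IsProjection Q → 0 ≤ ((A * (P ⊗ₖ Q)).trace).re) →
        0 ≤ ((A * ρ).trace).re) ∧
    (¬ Separable ρ ↔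
      ∃ A : Matrix (Fin m × Fin n) (Fin m × Fin n) ℂ, A.IsHermitian ∧
        (∀ σ : Matrix (Fin m × Fin n) (Fin m × Fin n) ℂ,
          IsDensity σ → Separable σ → 0 ≤ ((A * σ).trace).re) ∧
        ((A * ρ).trace).re < 0) := by
  have hP : ∀ {k : ℕ} (P : Matrix (Fin k) (Fin k) ℂ), IsProjection P → P.PosSemidef := by
    intro k P h
    have := Matrix.posSemidef_conjTranspose_mul_self P
    rwa [h.1.eq, h.2] at this
  refine ⟨⟨fun hs A _ h => ?_, fun h => ?_⟩, ⟨fun hs => ?_, ?_⟩⟩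
  · exact aux_sep A (aux_unit_all A fun v w hv hw => h _ _ (aux_proj v hv) (aux_proj w hw)) hs
  · by_contra hs
    obtain ⟨A, hA, hAp, hneg⟩ := aux_main ρ hρ hs
    exact absurd (h A hA fun P Q h1 h2 => aux_psd A hAp (hP P h1) (hP Q h2)) (not_le.2 hneg)
  · obtain ⟨A, hA, hAp, hneg⟩ := aux_main ρ hρ hs
    exact ⟨A, hA, fun σ _ hσ => aux_sep A hAp hσ, hneg⟩
  · rintro ⟨A, _, h, hneg⟩ hs
    exact absurd (h ρ hρ hs) (not_le.2 hneg)
end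
end

section
/- A density matrix ρ on ℂ² ⊗ ℂ² is separable if and only if its partial transpose ρ^{T₂} is positive semidefinite (the Peres–Horodecki positive-partial-transpose criterion: in 2⊗2 dimensions, positivity of the partial transpose is necessary and sufficient for separability). -/
open scoped ComplexOrder Kronecker

noncomputable section

section Aux

open Matrix Complex

abbrev M2 := Matrix (Fin 2) (Fin 2) ℂ
abbrev M4 := Matrix (Fin 2 × Fin 2) (Fin 2 × Fin 2) ℂ

/-- The cone generated by products of positive semidefinite matrices. -/
def SepC : AddSubmonoid M4 :=
  AddSubmonoid.closure {M | ∃ P Q : M2, P.PosSemidef ∧ Q.PosSemidef ∧ M = P ⊗ₖ Q}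

lemma sepC_mk {P Q : M2} (hP : P.PosSemidef) (hQ : Q.PosSemidef) : P ⊗ₖ Q ∈ SepC :=
  AddSubmonoid.subset_closure ⟨P, Q, hP, hQ, rfl⟩

lemma sepC_congr (T : M2) {ρ : M4} (h : ρ ∈ SepC) :
    ((1 : M2) ⊗ₖ T) * ρ * ((1 : M2) ⊗ₖ T)ᴴ ∈ SepC := by
  induction h using AddSubmonoid.closure_induction with
  | mem x hx =>
    obtain ⟨P, Q, hP, hQ, rfl⟩ := hx
    rw [conjTranspose_kronecker, ← mul_kronecker_mul, ← mul_kronecker_mul]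
    simp only [conjTranspose_one, one_mul, mul_one]
    exact sepC_mk hP (hQ.mul_mul_conjTranspose_same T)
  | zero => simp
  | add x y _ _ hx hy =>
    rw [mul_add, add_mul]
    exact SepC.add_mem hx hy

lemma sepC_exists {ρ : M4} (h : ρ ∈ SepC) :
    ∃ (k : ℕ) (lam : Fin k → ℝ) (ρ1 ρ2 : Fin k → M2),
    (∀ i, 0 ≤ lam i) ∧ (∀ i, IsDensity (ρ1 i)) ∧ (∀ i, IsDensity (ρ2 i)) ∧
    ρ = ∑ i, (lam i : ℂ) • (ρ1 i ⊗ₖ ρ2 i) := by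
  have norm : ∀ P : M2, P.PosSemidef → P ≠ 0 → ∃ (a : ℝ) (D : M2), 0 ≤ a ∧ IsDensity D ∧
      P = (a : ℂ) • D := by
    intro P hP h0
    have ht := hP.trace_nonneg
    have ht0 : P.trace ≠ 0 := fun h => h0 (hP.trace_eq_zero_iff.1 h)
    have hre : P.trace = ((P.trace.re : ℝ) : ℂ) := by
      rw [Complex.le_def] at ht
      apply Complex.ext <;> simp [← ht.2]
    have hr0 : (0:ℝ) ≤ P.trace.re := by
      rw [Complex.le_def] at ht
      simpa using ht.1
    refine ⟨P.trace.re, ((P.trace.re : ℂ)⁻¹) • P, hr0, ⟨?_, ?_⟩, ?_⟩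
    · refine hP.smul ?_
      rw [← Complex.ofReal_inv]
      exact_mod_cast inv_nonneg.2 hr0
    · rw [trace_smul, ← hre, smul_eq_mul, inv_mul_cancel₀ ht0]
    · rw [← hre, smul_smul, mul_inv_cancel₀ ht0, one_smul]
  induction h using AddSubmonoid.closure_induction with
  | mem x hx =>
    obtain ⟨P, Q, hP, hQ, rfl⟩ := hx
    by_cases hP0 : P = 0
    · exact ⟨0, Fin.elim0, Fin.elim0, Fin.elim0, fun i => i.elim0, fun i => i.elim0,
        fun i => i.elim0, by simp [hP0]⟩
    by_cases hQ0 : Q = 0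
    · exact ⟨0, Fin.elim0, Fin.elim0, Fin.elim0, fun i => i.elim0, fun i => i.elim0,
        fun i => i.elim0, by simp [hQ0]⟩
    obtain ⟨a, D, ha, hD, rfl⟩ := norm P hP hP0
    obtain ⟨b, E, hb, hE, rfl⟩ := norm Q hQ hQ0
    refine ⟨1, fun _ => a * b, fun _ => D, fun _ => E, fun _ => mul_nonneg ha hb,
      fun _ => hD, fun _ => hE, ?_⟩
    rw [smul_kronecker, kronecker_smul, smul_smul]; simp
  | zero =>
    exact ⟨0, Fin.elim0, Fin.elim0, Fin.elim0, fun i => i.elim0, fun i => i.elim0,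
        fun i => i.elim0, by simp⟩
  | add x y _ _ hx hy =>
    obtain ⟨k, l, r, s, h1, h2, h3, rfl⟩ := hx
    obtain ⟨k', l', r', s', h1', h2', h3', rfl⟩ := hy
    refine ⟨k + k', Fin.append l l', Fin.append r r', Fin.append s s', ?_, ?_, ?_, ?_⟩
    · intro i; refine Fin.addCases (fun i => ?_) (fun i => ?_) i <;> simp [h1, h1']
    · intro i; refine Fin.addCases (fun i => ?_) (fun i => ?_) i <;> simp [h2, h2']
    · intro i; refine Fin.addCases (fun i => ?_) (fun i => ?_) i <;> simp [h3, h3']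
    · simp [Fin.sum_univ_add]

lemma separable_of_sepC {ρ : M4} (h : ρ ∈ SepC) (ht : ρ.trace = 1) : Separable ρ := by
  obtain ⟨k, l, r, s, h1, h2, h3, rfl⟩ := sepC_exists h
  refine ⟨k, l, r, s, h1, ?_, h2, h3, rfl⟩
  have : (∑ i, (l i : ℂ)) = 1 := by
    rw [← ht, trace_sum]
    refine Finset.sum_congr rfl fun i _ => ?_
    rw [trace_smul, trace_kronecker, (h2 i).2, (h3 i).2]; simp
  exact_mod_cast this

lemma ppt_of_separable {ρ : M4} (h : Separable ρ) : (ptranspose2 ρ).PosSemidef := by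
  obtain ⟨k, l, r, s, h1, _, h2, h3, rfl⟩ := h
  have : ptranspose2 (∑ i, (l i : ℂ) • (r i ⊗ₖ s i)) = ∑ i, (l i : ℂ) • (r i ⊗ₖ (s i)ᵀ) := by
    ext p q
    simp [ptranspose2, Matrix.sum_apply, kroneckerMap_apply]
  rw [this]
  refine posSemidef_sum _ fun i _ => ?_
  exact ((h2 i).1.kronecker (h3 i).1.transpose).smul (by exact_mod_cast h1 i)

/-- block matrix -/
def bl (A B C : M2) : M4 :=
  !![1, 0; 0, 0] ⊗ₖ A + !![0, 1; 0, 0] ⊗ₖ B + !![0, 0; 1, 0] ⊗ₖ Bᴴ + !![0, 0; 0, 1] ⊗ₖ C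

lemma bl_congr (T A B C : M2) :
    ((1 : M2) ⊗ₖ T) * bl A B C * ((1 : M2) ⊗ₖ T)ᴴ = bl (T * A * Tᴴ) (T * B * Tᴴ) (T * C * Tᴴ) := by
  simp only [bl, conjTranspose_kronecker, mul_add, add_mul, ← mul_kronecker_mul,
    conjTranspose_one, one_mul, mul_one, conjTranspose_mul, conjTranspose_conjTranspose, mul_assoc]

def e4 : Fin 2 ⊕ Fin 2 → Fin 2 × Fin 2 := Sum.elim (fun i => (0, i)) (fun i => (1, i))

lemma bl_sub (A B C : M2) : (bl A B C).submatrix e4 e4 = fromBlocks A B Bᴴ C := by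
  ext i j
  rcases i with i | i <;> rcases j with j | j <;>
    simp [bl, e4, kroneckerMap_apply]

lemma bl_schur {A B C : M2} (hA : A.PosDef) (h : (bl A B C).PosSemidef) :
    (C - Bᴴ * A⁻¹ * B).PosSemidef := by
  have := h.submatrix e4
  rw [bl_sub] at this
  have := hA.isUnit.invertible
  exact (PosDef.fromBlocks₁₁ B C hA).1 ‹_›

lemma bl_exists {ρ : M4} (h : ρ.IsHermitian) : ∃ A B C, ρ = bl A B C ∧
    (ptranspose2 ρ)ᵀ = bl A Bᴴ C := by
  refine ⟨of fun i j => ρ (0, i) (0, j), of fun i j => ρ (0, i) (1, j),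
    of fun i j => ρ (1, i) (1, j), ?_, ?_⟩
  · ext ⟨i, k⟩ ⟨j, l⟩
    fin_cases i <;> fin_cases j <;> simp [bl, kroneckerMap_apply]
    exact (h.apply _ _).symm
  · ext ⟨i, k⟩ ⟨j, l⟩
    fin_cases i <;> fin_cases j <;> simp [bl, kroneckerMap_apply, ptranspose2]
    exact (h.apply _ _).symm

lemma psd2 {a d : ℝ} {c : ℂ} (ha : 0 ≤ a) (hd : 0 ≤ d) (h : normSq c ≤ a * d) :
    (!![(a : ℂ), c; star c, (d : ℂ)] : M2).PosSemidef := by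
  rcases ha.eq_or_lt with rfl | ha
  · have : c = 0 := by
      rw [← normSq_eq_zero]; exact le_antisymm (by simpa using h) (normSq_nonneg _)
    subst this
    have := PosSemidef.diagonal (d := ![(0:ℂ), (d:ℂ)]) (by
      intro i; fin_cases i
      · simp
      · simpa using hd)
    convert this using 1
    ext i j; fin_cases i <;> fin_cases j <;> simp
  · have h1 := posSemidef_vecMulVec_self_star ![(a : ℂ), star c]
    have h2 := PosSemidef.diagonal (d := ![(0:ℂ), ((d - normSq c / a : ℝ):ℂ)]) (by
      intro i; fin_cases i
      · simp
      · have : 0 ≤ d - normSq c / a := by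
          rw [sub_nonneg, div_le_iff₀ ha]; linarith
        show (0:ℂ) ≤ ((d - normSq c / a : ℝ):ℂ)
        exact_mod_cast this)
    have h3 := (h1.smul (a := ((a⁻¹ : ℝ) : ℂ)) (by exact_mod_cast inv_nonneg.2 ha.le)).add h2
    have ha' : (a : ℂ) ≠ 0 := by exact_mod_cast ha.ne'
    have hv : vecMulVec ![(a : ℂ), star c] (star ![(a : ℂ), star c]) =
        !![(a : ℂ) * a, a * c; star c * a, star c * c] := by
      ext i j
      rw [vecMulVec_apply]
      fin_cases i <;> fin_cases j <;> simp
    rw [hv] at h3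
    convert h3 using 1
    ext i j; fin_cases i <;> fin_cases j <;> simp <;> field_simp
    rw [normSq_eq_conj_mul_self]; ring

/-- Schur triangularisation for 2 by 2 matrices. -/
lemma unit_first {f : Fin 2 → ℂ} (hf : f ≠ 0) : ∃ V : M2, Vᴴ * V = 1 ∧ V * Vᴴ = 1 ∧
    ∃ r : ℂ, r ≠ 0 ∧ ∀ i, f i = r * V i 0 := by
  have hn : 0 < normSq (f 0) + normSq (f 1) := by
    by_contra hcon
    have h0 := normSq_nonneg (f 0)
    have h1 := normSq_nonneg (f 1)
    apply hf
    ext i; fin_cases i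
    · exact normSq_eq_zero.1 (by simp only [Fin.zero_eta, Fin.mk_one]; linarith)
    · exact normSq_eq_zero.1 (by simp only [Fin.zero_eta, Fin.mk_one]; linarith)
  set r : ℝ := √(normSq (f 0) + normSq (f 1)) with hr
  have hr2 : (r : ℂ) * r = star (f 0) * f 0 + star (f 1) * f 1 := by
    have : r * r = normSq (f 0) + normSq (f 1) := Real.mul_self_sqrt hn.le
    rw [← Complex.ofReal_mul, this, Complex.ofReal_add, normSq_eq_conj_mul_self,
      normSq_eq_conj_mul_self]; rfl
  have hr0 : (r : ℂ) ≠ 0 := by exact_mod_cast (Real.sqrt_pos.2 hn).ne'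
  have hV : (!![f 0 / r, - star (f 1) / r; f 1 / r, star (f 0) / r] : M2)ᴴ *
      !![f 0 / r, - star (f 1) / r; f 1 / r, star (f 0) / r] = 1 := by
    ext i j; fin_cases i <;> fin_cases j <;>
      simp [Matrix.mul_apply, Fin.sum_univ_two] <;> field_simp <;>
      simp only [RCLike.star_def] at hr2 <;> first | (ring1) | linear_combination -hr2
  refine ⟨_, hV, mul_eq_one_comm.1 hV, r, hr0, ?_⟩
  intro i; fin_cases i <;> simp <;> field_simp

lemma schur2 (M : M2) : ∃ V : M2, Vᴴ * V = 1 ∧ V * Vᴴ = 1 ∧ (Vᴴ * M * V) 1 0 = 0 := by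
  obtain ⟨c, hc⟩ := Module.End.exists_eigenvalue (Matrix.toLin' M)
  obtain ⟨f, hf⟩ := hc.exists_hasEigenvector
  obtain ⟨V, h1, h2, r, hr, hV⟩ := unit_first hf.2
  refine ⟨V, h1, h2, ?_⟩
  have hfe : f = r • (V.col 0) := by ext i; simp [hV i]
  have he := hf.apply_eq_smul
  rw [toLin'_apply, hfe, mulVec_smul, smul_comm] at he
  have he : M *ᵥ V.col 0 = c • V.col 0 := smul_right_injective _ hr he
  have : (Vᴴ * M * V) 1 0 = (Vᴴ *ᵥ (M *ᵥ V.col 0)) 1 := by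
    rw [mulVec_mulVec]; rfl
  rw [this, he, mulVec_smul]
  have : (Vᴴ *ᵥ V.col 0) 1 = (Vᴴ * V) 1 0 := rfl
  rw [Pi.smul_apply, this, h1]; simp

lemma phase (w : ℂ) : ∃ e : ℂ, normSq e = 1 ∧ (w * e).re = 0 := by
  by_cases hw : w = 0
  · exact ⟨1, by simp, by simp [hw]⟩
  · have h0 : (‖w‖ : ℝ) ≠ 0 := norm_ne_zero_iff.2 hw
    refine ⟨I * star w / (‖w‖ : ℝ), ?_, ?_⟩
    · rw [normSq_div, normSq_mul, normSq_I, normSq_ofReal]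
      simp only [RCLike.star_def, normSq_conj, one_mul]
      rw [normSq_eq_norm_sq]; field_simp
    · have : w * (I * star w / (‖w‖ : ℝ)) = I * ((normSq w / ‖w‖ : ℝ) : ℂ) := by
        rw [Complex.ofReal_div, normSq_eq_conj_mul_self]
        simp only [RCLike.star_def]; ring
      rw [this]; simp

/-- solving for the entries of the perturbation -/
lemma entries {p q : ℝ} {t : ℂ} (hp : 0 ≤ p) (hq : 0 ≤ q) (ht : normSq t = p * q) (u v : ℂ) :
    ∃ κ b g : ℂ, normSq κ + normSq g = p ∧ normSq κ + normSq b = q ∧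
      star κ * b + star g * κ = t ∧ (star u * b).re = (star v * g).re := by
  rcases hp.eq_or_lt with rfl | hp
  · have : t = 0 := by rw [← normSq_eq_zero, ht]; simp
    subst this
    obtain ⟨e, he, hw⟩ := phase (star u)
    refine ⟨0, √q * e, 0, by simp, ?_, by simp, ?_⟩
    · rw [normSq_mul, he, normSq_ofReal, Real.mul_self_sqrt hq]; simp
    · have : star u * (√q * e) = (√q : ℝ) * (star u * e) := by ring
      rw [this, re_ofReal_mul, hw]; simp
  · obtain ⟨e, he, hw⟩ := phase (star u * (t / p) ^ 2 - star v)
    have hpq : 0 < p + q := by linarith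
    set r : ℝ := p / √(p + q) with hr
    have hr2 : r * r = p ^ 2 / (p + q) := by
      rw [hr, div_mul_div_comm, Real.mul_self_sqrt hpq.le]; ring
    have hp' : (p : ℂ) ≠ 0 := by exact_mod_cast hp.ne'
    have hpq' : (p + q : ℂ) ≠ 0 := by exact_mod_cast hpq.ne'
    refine ⟨t / p * (r * e), (t / p) ^ 2 * (r * e), r * e, ?_, ?_, ?_, ?_⟩
    · simp only [normSq_mul, normSq_div, he, normSq_ofReal, hr2, ht]
      field_simp; ring
    · simp only [normSq_mul, normSq_div, he, normSq_ofReal, hr2, ht, map_pow]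
      field_simp
    · have h1 : star e * e = 1 := by
        have := normSq_eq_conj_mul_self (z := e)
        rw [he] at this; simpa using this.symm
      have h2 : star t * t = p * q := by
        have := normSq_eq_conj_mul_self (z := t)
        rw [ht] at this; simpa using this.symm
      have h3 : (r : ℂ) * r = p ^ 2 / (p + q) := by exact_mod_cast congrArg (fun x : ℝ => (x : ℂ)) hr2
      simp only [RCLike.star_def] at h1 h2
      simp only [RCLike.star_def, map_mul, map_div₀, conj_ofReal]
      have : (starRingEnd ℂ) t / p * (r * (starRingEnd ℂ) e) * ((t / p) ^ 2 * (r * e)) +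
          r * (starRingEnd ℂ) e * (t / p * (r * e)) =
          (r * r) * ((starRingEnd ℂ) e * e) * (t / p) *
            (((starRingEnd ℂ) t * t) / p ^ 2 + 1) := by
        field_simp
      rw [this, h1, h2, h3]
      field_simp; ring
    · have : star u * ((t / p) ^ 2 * (r * e)) - star v * (r * e) =
          (r : ℝ) * ((star u * (t / p) ^ 2 - star v) * e) := by ring
      rw [← sub_eq_zero, ← sub_re, this, re_ofReal_mul, hw]; simp

/-- The Lorentz-cone reduction. -/
lemma lorentz {x y G H : ℝ} {c : ℂ} (hGH : G ≠ H) (h1 : G ≤ x) (h2 : H ≤ y) (h3 : H ≤ x) (h4 : G ≤ y)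
    (h5 : normSq c ≤ (x - G) * (y - H)) (h6 : normSq c ≤ (x - H) * (y - G)) :
    ∃ (p q : ℝ) (t : ℂ), 0 ≤ p ∧ 0 ≤ q ∧ G + p = H + q ∧ normSq t = p * q ∧
      0 ≤ x - G - p ∧ 0 ≤ y - H - q ∧ normSq (c - t) ≤ (x - G - p) * (y - H - q) := by
  set m := (G + H) / 2 with hm
  set δ := |G - H| / 2 with hδ
  set Z := |x - y| / 2 with hZ
  set T := (x + y) / 2 - m with hT
  have hδ0 : 0 < δ := by
    have := abs_pos.2 (sub_ne_zero.2 hGH); positivity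
  have hZ0 : 0 ≤ Z := by positivity
  have hT0 : 0 ≤ T := by simp only [hT, hm]; linarith
  have hv := normSq_nonneg c
  set R := √((Z + δ) ^ 2 + normSq c) with hR
  have hR2 : R ^ 2 = (Z + δ) ^ 2 + normSq c := Real.sq_sqrt (by positivity)
  have hR0 : 0 ≤ R := Real.sqrt_nonneg _
  have hTR : R ≤ T := by
    rw [hR]
    apply Real.sqrt_le_iff.2 ⟨hT0, ?_⟩
    simp only [hT, hm, hZ, hδ]
    rcases abs_cases (x - y) with ⟨e1, _⟩ | ⟨e1, _⟩ <;>
      rcases abs_cases (G - H) with ⟨e2, _⟩ | ⟨e2, _⟩ <;> rw [e1, e2] <;> nlinarith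
  set l := δ / (Z + δ) with hl
  have hl0 : 0 ≤ l := by positivity
  have hlm : l * (Z + δ) = δ := by rw [hl]; field_simp
  have hl1 : l ≤ 1 := by rw [hl, div_le_one (by positivity)]; linarith
  have hlR : (l * R) ^ 2 = δ ^ 2 + l ^ 2 * normSq c := by
    rw [mul_pow, hR2, mul_add, ← mul_pow, hlm]
  have hlR' : ((1 - l) * R) ^ 2 = Z ^ 2 + (1 - l) ^ 2 * normSq c := by
    have : (1 - l) * (Z + δ) = Z := by linarith
    rw [mul_pow, hR2, mul_add, ← mul_pow, this]
  have hd : δ ≤ l * R := abs_le_of_sq_le_sq' (by nlinarith [sq_nonneg l]) (by positivity) |>.2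
  have hz : Z ≤ (1 - l) * R :=
    abs_le_of_sq_le_sq' (by nlinarith [mul_nonneg (sq_nonneg (1 - l)) hv])
      (mul_nonneg (by linarith) hR0) |>.2
  have hd2 : δ ^ 2 = (G - H) ^ 2 / 4 := by rw [hδ, div_pow, sq_abs]; ring
  have hz2 : Z ^ 2 = (x - y) ^ 2 / 4 := by rw [hZ, div_pow, sq_abs]; ring
  have ha1 := le_abs_self (G - H)
  have ha2 := neg_abs_le (G - H)
  have hb1 := le_abs_self (x - y)
  have hb2 := neg_abs_le (x - y)
  have hW : (1 - l) * R ≤ T - l * R := by linarith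
  have hW0 : 0 ≤ (1 - l) * R := by linarith
  refine ⟨m + l * R - G, m + l * R - H, l * c, ?_, ?_, by ring, ?_, ?_, ?_, ?_⟩
  · linarith
  · linarith
  · rw [normSq_mul, normSq_ofReal]
    simp only [hm]
    linear_combination -hlR - hd2
  · linarith
  · linarith
  · have : c - l * c = ((1 - l : ℝ) : ℂ) * c := by push_cast; ring
    rw [this, normSq_mul, normSq_ofReal]
    have e : (x - G - (m + l * R - G)) * (y - H - (m + l * R - H)) =
      (T - l * R) ^ 2 - (x - y) ^ 2 / 4 := by simp only [hT]; ring
    rw [e, ← hz2]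
    have := pow_le_pow_left₀ hW0 hW 2
    linarith

lemma ctr2 (a b c d : ℂ) : (!![a, b; c, d] : M2)ᴴ =
    !![(starRingEnd ℂ) a, (starRingEnd ℂ) c; (starRingEnd ℂ) b, (starRingEnd ℂ) d] := by
  ext i j; fin_cases i <;> fin_cases j <;> rfl

lemma psd2_conv {M : M2} (h : M.PosSemidef) : ∃ (a d : ℝ) (c : ℂ), 0 ≤ a ∧ 0 ≤ d ∧
    normSq c ≤ a * d ∧ M = !![(a : ℂ), c; star c, (d : ℂ)] := by
  have h0 := h.diag_nonneg (i := 0)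
  have h1 := h.diag_nonneg (i := 1)
  have hd := h.det_nonneg
  have h10 : M 1 0 = star (M 0 1) := (h.1.apply 1 0).symm
  rw [Complex.le_def] at h0 h1
  have e0 : M 0 0 = ((M 0 0).re : ℂ) := by apply Complex.ext <;> simp [← h0.2]
  have e1 : M 1 1 = ((M 1 1).re : ℂ) := by apply Complex.ext <;> simp [← h1.2]
  refine ⟨(M 0 0).re, (M 1 1).re, M 0 1, h0.1, h1.1, ?_, ?_⟩
  · rw [det_fin_two, h10, e0, e1, RCLike.star_def, mul_comm (M 0 1), ← normSq_eq_conj_mul_self] at hd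
    have : (0 : ℝ) ≤ (M 0 0).re * (M 1 1).re - normSq (M 0 1) := by exact_mod_cast hd
    linarith
  · ext i j; fin_cases i <;> fin_cases j
    · exact e0
    · rfl
    · exact h10
    · exact e1

lemma normal2 {a b g : ℂ} (h : normSq b = normSq g) :
    (!![a, b; g, a] : M2) * (!![a, b; g, a] : M2)ᴴ =
      (!![a, b; g, a] : M2)ᴴ * (!![a, b; g, a] : M2) := by
  have h' : (starRingEnd ℂ) b * b = (starRingEnd ℂ) g * g := by
    have := congrArg (fun x : ℝ => (x : ℂ)) h
    simpa only [normSq_eq_conj_mul_self] using this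
  rw [ctr2]
  ext i j; fin_cases i <;> fin_cases j <;> simp [Matrix.mul_apply, Fin.sum_univ_two]
  · linear_combination h'
  · ring
  · ring
  · linear_combination -h'

lemma key_eq {α β γ : ℂ} {X Y : M2} (hX : X = !![α, β; γ, α]) (hne : normSq γ ≠ normSq β)
    (h1 : (Y - Xᴴ * X).PosSemidef) (h2 : (Y - X * Xᴴ).PosSemidef) :
    ∃ D : M2, (X + D) * (X + D)ᴴ = (X + D)ᴴ * (X + D) ∧
      (X - D) * (X - D)ᴴ = (X - D)ᴴ * (X - D) ∧ (Y - Xᴴ * X - Dᴴ * D).PosSemidef := by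
  obtain ⟨a, d, c, ha, hd, hc, hM⟩ := psd2_conv h1
  obtain ⟨a', d', c', ha', hd', hc', hM'⟩ := psd2_conv h2
  have nn : ∀ z : ℂ, (starRingEnd ℂ) z * z = (normSq z : ℂ) := fun z => normSq_eq_conj_mul_self.symm
  have hdiff : X * Xᴴ - Xᴴ * X = !![((normSq β - normSq γ : ℝ) : ℂ), 0;
      0, ((normSq γ - normSq β : ℝ) : ℂ)] := by
    rw [hX, ctr2]
    ext i j; fin_cases i <;> fin_cases j <;>
      simp [Matrix.mul_apply, Fin.sum_univ_two, ← nn] <;> ring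
  have hdd : (!![(a : ℂ), c; star c, (d : ℂ)] : M2) =
      !![(a' : ℂ), c'; star c', (d' : ℂ)] + !![((normSq β - normSq γ : ℝ) : ℂ), 0;
      0, ((normSq γ - normSq β : ℝ) : ℂ)] := by
    rw [← hM, ← hM', ← hdiff]; abel
  have e00 := congrFun (congrFun hdd 0) 0
  have e01 := congrFun (congrFun hdd 0) 1
  have e11 := congrFun (congrFun hdd 1) 1
  simp only [Matrix.add_apply, of_apply, cons_val', cons_val_zero, cons_val_one, cons_val_fin_one,
    add_zero] at e00 e01 e11
  have e00 : a = a' + (normSq β - normSq γ) := by exact_mod_cast e00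
  have e11 : d = d' + (normSq γ - normSq β) := by exact_mod_cast e11
  subst e01
  obtain ⟨p, q, t, hp, hq, hs, ht, r1, r2, r3⟩ := lorentz (x := a + normSq γ) (y := d + normSq β)
    (G := normSq γ) (H := normSq β) (c := c) hne (by linarith) (by linarith) (by linarith)
    (by linarith) (by convert hc using 2 <;> ring) (by convert hc' using 2 <;> linarith)
  obtain ⟨κ, b, g, k1, k2, k3, k4⟩ := entries hp hq ht β γ
  have habs : ∀ x y : ℂ, normSq (x + y) = normSq x + normSq y + 2 * (star x * y).re := by
    intro x y; rw [normSq_add]; simp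
  have habs' : ∀ x y : ℂ, normSq (x - y) = normSq x + normSq y - 2 * (star x * y).re := by
    intro x y; rw [normSq_sub]; simp
  refine ⟨!![κ, b; g, κ], ?_, ?_, ?_⟩
  · have : X + !![κ, b; g, κ] = !![α + κ, β + b; γ + g, α + κ] := by rw [hX]; simp
    rw [this]
    apply normal2
    rw [habs, habs]; linarith
  · have : X - !![κ, b; g, κ] = !![α - κ, β - b; γ - g, α - κ] := by
      rw [hX]; ext i j; fin_cases i <;> fin_cases j <;> simp
    rw [this]
    apply normal2
    rw [habs', habs']; linarith
  · rw [hM]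
    have := psd2 r1 r2 r3
    convert this using 1
    have k1' : (normSq κ : ℂ) + normSq g = p := by exact_mod_cast k1
    have k2' : (normSq κ : ℂ) + normSq b = q := by exact_mod_cast k2
    have k3' := congrArg star k3
    simp only [RCLike.star_def, map_add, map_mul, conj_conj] at k3 k3'
    ext i j; fin_cases i <;> fin_cases j <;>
      simp [Matrix.mul_apply, Fin.sum_univ_two, nn]
    · linear_combination k1'
    · linear_combination k3
    · linear_combination k3'
    · linear_combination k2'

lemma key_s11 (X Y : M2) (h1 : (Y - Xᴴ * X).PosSemidef) (h2 : (Y - X * Xᴴ).PosSemidef) :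
    ∃ D : M2, (X + D) * (X + D)ᴴ = (X + D)ᴴ * (X + D) ∧
      (X - D) * (X - D)ᴴ = (X - D)ᴴ * (X - D) ∧ (Y - Xᴴ * X - Dᴴ * D).PosSemidef := by
  by_cases hn : X * Xᴴ = Xᴴ * X
  · exact ⟨0, by simpa using hn, by simpa using hn, by simpa using h1⟩
  obtain ⟨V, hV1, hV2, hV⟩ := schur2 (X * Xᴴ - Xᴴ * X)
  -- cancellation rules
  have cV1 : ∀ Z : M2, Vᴴ * (V * Z) = Z := fun Z => by rw [← mul_assoc, hV1, one_mul]
  have cV2 : ∀ Z : M2, V * (Vᴴ * Z) = Z := fun Z => by rw [← mul_assoc, hV2, one_mul]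
  set X' := Vᴴ * X * V with hX'
  set Y' := Vᴴ * Y * V with hY'
  have eX : X = V * X' * Vᴴ := by simp only [hX', mul_assoc, cV2, hV2, mul_one]
  have eY : Y = V * Y' * Vᴴ := by simp only [hY', mul_assoc, cV2, hV2, mul_one]
  have g1 : (Y' - X'ᴴ * X').PosSemidef := by
    convert h1.conjTranspose_mul_mul_same V using 1
    simp only [hX', hY', conjTranspose_mul, conjTranspose_conjTranspose, mul_sub, sub_mul,
      mul_assoc, cV2]
  have g2 : (Y' - X' * X'ᴴ).PosSemidef := by
    convert h2.conjTranspose_mul_mul_same V using 1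
    simp only [hX', hY', conjTranspose_mul, conjTranspose_conjTranspose, mul_sub, sub_mul,
      mul_assoc, cV2]
  have hn' : X' * X'ᴴ ≠ X'ᴴ * X' := by
    intro h
    apply hn
    have := congrArg (fun Z => V * Z * Vᴴ) h
    simpa only [hX', conjTranspose_mul, conjTranspose_conjTranspose,
      mul_assoc, cV2, hV2, mul_one] using this
  have hV' : (X' * X'ᴴ - X'ᴴ * X') 1 0 = 0 := by
    rw [← hV]
    congr 2
    simp only [hX', conjTranspose_mul, conjTranspose_conjTranspose, mul_sub, sub_mul,
      mul_assoc, cV2]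
  obtain ⟨α, β, γ, ε, hE⟩ : ∃ α β γ ε : ℂ, X' = !![α, β; γ, ε] := ⟨_, _, _, _, eta_fin_two X'⟩
  have hoff : γ * star α + ε * star β = star β * α + star ε * γ := by
    rw [hE, ctr2] at hV'
    simpa [Matrix.mul_apply, Fin.sum_univ_two, sub_eq_zero] using hV'
  have hoff' := congrArg star hoff
  simp only [RCLike.star_def, map_add, map_mul, conj_conj] at hoff hoff'
  have nn : ∀ z : ℂ, (starRingEnd ℂ) z * z = (normSq z : ℂ) := fun z => normSq_eq_conj_mul_self.symm
  have hne : normSq γ ≠ normSq β := by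
    intro h
    have h' : (starRingEnd ℂ) γ * γ = (starRingEnd ℂ) β * β := by rw [nn, nn, h]
    apply hn'
    rw [hE, ctr2]
    ext i j; fin_cases i <;> fin_cases j <;> simp [Matrix.mul_apply, Fin.sum_univ_two]
    · linear_combination -h'
    · linear_combination hoff'
    · linear_combination hoff
    · linear_combination h'
  have hαε : ε = α := by
    have h3 : normSq γ * normSq (α - ε) = normSq β * normSq (α - ε) := by
      have : γ * (starRingEnd ℂ) (α - ε) = (starRingEnd ℂ) β * (α - ε) := by
        rw [map_sub]; linear_combination hoff
      have := congrArg normSq this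
      simpa only [normSq_mul, normSq_conj] using this
    have : (normSq γ - normSq β) * normSq (α - ε) = 0 := by linarith
    rcases mul_eq_zero.1 this with h | h
    · exact absurd (sub_eq_zero.1 h) hne
    · exact (sub_eq_zero.1 (normSq_eq_zero.1 h)).symm
  subst hαε
  obtain ⟨D, d1, d2, d3⟩ := key_eq hE hne g1 g2
  have tr : ∀ Z : M2, Z * Zᴴ = Zᴴ * Z →
      (V * Z * Vᴴ) * (V * Z * Vᴴ)ᴴ = (V * Z * Vᴴ)ᴴ * (V * Z * Vᴴ) := by
    intro Z hZ
    simp only [conjTranspose_mul, conjTranspose_conjTranspose, mul_assoc, cV1]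
    rw [← mul_assoc Z, hZ, mul_assoc]
  refine ⟨V * D * Vᴴ, ?_, ?_, ?_⟩
  · rw [eX, ← add_mul, ← mul_add]; exact tr _ d1
  · rw [eX, ← sub_mul, ← mul_sub]; exact tr _ d2
  · convert d3.mul_mul_conjTranspose_same V using 1
    rw [eX, eY]
    simp only [conjTranspose_mul, conjTranspose_conjTranspose, mul_sub, sub_mul,
      mul_assoc, cV1]

lemma sep_normal {N : M2} (hN : N * Nᴴ = Nᴴ * N) : bl 1 N (Nᴴ * N) ∈ SepC := by
  obtain ⟨V, hV1, hV2, hV⟩ := schur2 N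
  have cV1 : ∀ Z : M2, Vᴴ * (V * Z) = Z := fun Z => by rw [← mul_assoc, hV1, one_mul]
  have cV2 : ∀ Z : M2, V * (Vᴴ * Z) = Z := fun Z => by rw [← mul_assoc, hV2, one_mul]
  set X := Vᴴ * N * V with hX
  have eN : N = V * X * Vᴴ := by simp only [hX, mul_assoc, cV2, hV2, mul_one]
  have hXn : X * Xᴴ = Xᴴ * X := by
    simp only [hX, conjTranspose_mul, conjTranspose_conjTranspose, mul_assoc, cV2]
    rw [← mul_assoc N, hN, mul_assoc]
  obtain ⟨n, b, hE⟩ : ∃ n b : ℂ, X = !![n, b; 0, X 1 1] := ⟨_, _, by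
    conv_lhs => rw [eta_fin_two X]
    rw [hV]⟩
  generalize X 1 1 = d at hE
  have hb : b = 0 := by
    have := congrFun (congrFun hXn 0) 0
    rw [hE, ctr2] at this
    simp [Matrix.mul_apply, Fin.sum_univ_two] at this
    have h2 : (normSq b : ℂ) = 0 := by
      rw [normSq_eq_conj_mul_self]; linear_combination this
    exact normSq_eq_zero.1 (by exact_mod_cast h2)
  subst hb
  have h1 : bl 1 X (Xᴴ * X) ∈ SepC := by
    have : bl 1 X (Xᴴ * X) =
        !![((1 : ℝ) : ℂ), n; star n, (normSq n : ℝ)] ⊗ₖ !![((1 : ℝ) : ℂ), 0; star 0, (0 : ℝ)] +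
        !![((1 : ℝ) : ℂ), d; star d, (normSq d : ℝ)] ⊗ₖ !![((0 : ℝ) : ℂ), 0; star 0, (1 : ℝ)] := by
      rw [hE]
      ext ⟨i, k⟩ ⟨j, l⟩
      fin_cases i <;> fin_cases j <;> fin_cases k <;> fin_cases l <;>
        simp [bl, kroneckerMap_apply, Matrix.mul_apply, Fin.sum_univ_two, normSq_eq_conj_mul_self]
    rw [this]
    exact SepC.add_mem
      (sepC_mk (psd2 (by norm_num) (normSq_nonneg _) (by simp)) (psd2 (by simp) (by simp) (by simp)))
      (sepC_mk (psd2 (by norm_num) (normSq_nonneg _) (by simp)) (psd2 (by simp) (by simp) (by simp)))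
  have h2 := sepC_congr V h1
  rw [bl_congr] at h2
  convert h2 using 1
  rw [eN]
  simp only [conjTranspose_mul, conjTranspose_conjTranspose, mul_assoc, cV1, mul_one, one_mul, hV2]

lemma psdE1 : (!![0, 0; 0, 1] : M2).PosSemidef := by
  have := psd2 (a := 0) (d := 1) (c := 0) (by simp) (by simp) (by simp)
  simpa using this

lemma sep_one {X Y : M2} (h1 : (Y - Xᴴ * X).PosSemidef) (h2 : (Y - X * Xᴴ).PosSemidef) :
    bl 1 X Y ∈ SepC := by
  obtain ⟨D, d1, d2, d3⟩ := key_s11 X Y h1 h2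
  have s1 := sep_normal d1
  have s2 := sep_normal d2
  have half : ∀ Z : M4, Z ∈ SepC → (2⁻¹ : ℂ) • Z ∈ SepC := by
    intro Z hZ
    induction hZ using AddSubmonoid.closure_induction with
    | mem x hx =>
      obtain ⟨P, Q, hP, hQ, rfl⟩ := hx
      rw [← smul_kronecker]
      refine sepC_mk (hP.smul ?_) hQ
      have : (0 : ℝ) ≤ 2⁻¹ := by norm_num
      have h' : ((0 : ℝ) : ℂ) ≤ ((2⁻¹ : ℝ) : ℂ) := by exact_mod_cast this
      simpa using h'
    | zero => simp
    | add x y _ _ hx hy => rw [smul_add]; exact SepC.add_mem hx hy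
  have := SepC.add_mem (SepC.add_mem (half _ s1) (half _ s2)) (sepC_mk psdE1 d3)
  convert this using 1
  have hC : Y = (2⁻¹ : ℂ) • ((X + D)ᴴ * (X + D)) + (2⁻¹ : ℂ) • ((X - D)ᴴ * (X - D)) +
      (Y - Xᴴ * X - Dᴴ * D) := by
    simp only [conjTranspose_add, conjTranspose_sub, mul_add, add_mul, mul_sub, sub_mul]
    module
  have hC' := fun i j => congrFun (congrFun hC i) j
  ext ⟨i, k⟩ ⟨j, l⟩
  fin_cases i <;> fin_cases j <;> simp [bl, kroneckerMap_apply]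
  · ring
  · ring
  · ring
  · have := hC' k l
    simpa using this


open scoped MatrixOrder in
lemma exists_root {A : M2} (hA : A.PosSemidef) : ∃ S : M2, A = S * Sᴴ := by
  obtain ⟨B, hB⟩ := CStarAlgebra.nonneg_iff_eq_star_mul_self.mp hA.nonneg
  exact ⟨Bᴴ, by rw [hB, conjTranspose_conjTranspose]; rfl⟩

lemma sep_posDef {A B C : M2} (hA : A.PosDef) (h1 : (bl A B C).PosSemidef)
    (h2 : (bl A Bᴴ C).PosSemidef) : bl A B C ∈ SepC := by
  have g1 := bl_schur hA h1
  have g2 := bl_schur hA h2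
  rw [conjTranspose_conjTranspose] at g2
  obtain ⟨S, hS⟩ := exists_root hA.posSemidef
  have hdet : IsUnit S.det := by
    rw [isUnit_iff_ne_zero]
    intro h0
    have := hA.det_pos
    rw [hS, det_mul, h0, zero_mul] at this
    exact lt_irrefl _ this
  obtain ⟨R, hSR, hRS⟩ : ∃ R : M2, S * R = 1 ∧ R * S = 1 :=
    ⟨S⁻¹, mul_nonsing_inv S hdet, nonsing_inv_mul S hdet⟩
  have hSR' : Rᴴ * Sᴴ = 1 := by rw [← conjTranspose_mul, hSR, conjTranspose_one]
  have hRS' : Sᴴ * Rᴴ = 1 := by rw [← conjTranspose_mul, hRS, conjTranspose_one]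
  have c1 : ∀ Z : M2, S * (R * Z) = Z := fun Z => by rw [← mul_assoc, hSR, one_mul]
  have c2 : ∀ Z : M2, Sᴴ * (Rᴴ * Z) = Z := fun Z => by rw [← mul_assoc, hRS', one_mul]
  have hinv : A⁻¹ = Rᴴ * R := by
    apply inv_eq_right_inv
    rw [hS]; simp only [mul_assoc, c2, hSR]
  rw [hinv] at g1 g2
  have s := sep_one (X := R * B * Rᴴ) (Y := R * C * Rᴴ)
    (by
      convert g1.mul_mul_conjTranspose_same R using 1
      simp only [conjTranspose_mul, conjTranspose_conjTranspose, mul_sub, sub_mul, mul_assoc])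
    (by
      convert g2.mul_mul_conjTranspose_same R using 1
      simp only [conjTranspose_mul, conjTranspose_conjTranspose, mul_sub, sub_mul, mul_assoc])
  have s' := sepC_congr S s
  rw [bl_congr] at s'
  convert s' using 1
  simp only [mul_one, mul_assoc, c1, hSR', hS]

lemma psd_zero {n : Type*} [Fintype n] [DecidableEq n] {M : Matrix n n ℂ} (h : M.PosSemidef)
    {i : n} (hi : M i i = 0) (j : n) : M i j = 0 := by
  have h1 : M *ᵥ Pi.single i 1 = 0 := by
    rw [← h.dotProduct_mulVec_zero_iff]
    simp [← Pi.single_star, hi]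
  have h2 : M j i = 0 := by simpa using congrFun h1 j
  rw [← h.1.apply i j, h2, star_zero]

lemma bl00 (A B C : M2) (i j : Fin 2) : bl A B C (0, i) (0, j) = A i j := by
  simp [bl, kroneckerMap_apply]
lemma bl01 (A B C : M2) (i j : Fin 2) : bl A B C (0, i) (1, j) = B i j := by
  simp [bl, kroneckerMap_apply]

lemma bl_psdA {A B C : M2} (h : (bl A B C).PosSemidef) : A.PosSemidef := by
  convert h.submatrix (fun i : Fin 2 => ((0 : Fin 2), i)) using 1
  ext i j; simp [bl00]

lemma bl_psdC {A B C : M2} (h : (bl A B C).PosSemidef) : C.PosSemidef := by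
  convert h.submatrix (fun i : Fin 2 => ((1 : Fin 2), i)) using 1
  ext i j; simp [bl, kroneckerMap_apply]

lemma psdE0 : (!![1, 0; 0, 0] : M2).PosSemidef := by
  have := psd2 (a := 1) (d := 0) (c := 0) (by simp) (by simp) (by simp)
  simpa using this

lemma sep_corner {A B C : M2} (h00 : A 0 0 = 0) (h1 : (bl A B C).PosSemidef)
    (h2 : (bl A Bᴴ C).PosSemidef) : bl A B C ∈ SepC := by
  have z1 := psd_zero h1 (i := (0, 0)) (by rw [bl00, h00])
  have z2 := psd_zero h2 (i := (0, 0)) (by rw [bl00, h00])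
  have hA := bl_psdA h1
  have a01 : A 0 1 = 0 := by simpa [bl00] using z1 (0, 1)
  have a10 : A 1 0 = 0 := by rw [← hA.1.apply, a01, star_zero]
  have b00 : B 0 0 = 0 := by simpa [bl01] using z1 (1, 0)
  have b01 : B 0 1 = 0 := by simpa [bl01] using z1 (1, 1)
  have b10 : B 1 0 = 0 := by simpa [bl01] using z2 (1, 1)
  have ha := hA.diag_nonneg (i := 1)
  rw [Complex.le_def] at ha
  obtain ⟨a, ha0, hae⟩ : ∃ a : ℝ, 0 ≤ a ∧ A 1 1 = a :=
    ⟨(A 1 1).re, ha.1, by apply Complex.ext <;> simp [← ha.2]⟩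
  have eA : A = !![0, 0; 0, (a : ℂ)] := by rw [eta_fin_two A, h00, a01, a10, hae]
  obtain ⟨x, hx⟩ : ∃ x, B 1 1 = x := ⟨_, rfl⟩
  have eB : B = !![0, 0; 0, x] := by rw [eta_fin_two B, b00, b01, b10, hx]
  rcases ha0.eq_or_lt with rfl | ha0
  · have z3 := psd_zero h1 (i := (0, 1)) (by rw [bl00, hae]; simp)
    have b11 : x = 0 := by rw [← hx]; simpa [bl01] using z3 (1, 1)
    subst b11
    have s := sepC_mk psdE1 (bl_psdC h1)
    convert s using 1
    rw [eA, eB]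
    ext ⟨i, k⟩ ⟨j, l⟩
    fin_cases i <;> fin_cases j <;> fin_cases k <;> fin_cases l <;> simp [bl, kroneckerMap_apply]
  · have hE : (bl (A + !![1, 0; 0, 0]) B C).PosSemidef := by
      convert h1.add (psdE0.kronecker psdE0) using 1
      rw [bl, bl, kronecker_add]; abel
    have hD : (A + !![1, 0; 0, 0]).PosDef := by
      rw [(hA.add psdE0).posDef_iff_det_ne_zero, eA]
      simp [det_fin_two, ha0.ne']
    have ha' : (a : ℂ) ≠ 0 := by exact_mod_cast ha0.ne'
    have hinv : (A + !![1, 0; 0, 0])⁻¹ = !![1, 0; 0, (a : ℂ)⁻¹] := by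
      apply inv_eq_right_inv
      rw [eA]
      ext i j; fin_cases i <;> fin_cases j <;> simp [Matrix.mul_apply, Fin.sum_univ_two, ha']
    have g := bl_schur hD hE
    rw [hinv, eB, ctr2] at g
    have p1 : (!![(a : ℂ), x; star x, ((normSq x / a : ℝ) : ℂ)] : M2).PosSemidef :=
      psd2 ha0.le (div_nonneg (normSq_nonneg _) ha0.le) (by field_simp; exact le_refl _)
    have s := SepC.add_mem (sepC_mk p1 psdE1) (sepC_mk psdE1 g)
    convert s using 1
    rw [eA, eB]
    ext ⟨i, k⟩ ⟨j, l⟩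
    fin_cases i <;> fin_cases j <;> fin_cases k <;> fin_cases l <;>
      simp [bl, kroneckerMap_apply, Matrix.mul_apply, Fin.sum_univ_two, normSq_eq_conj_mul_self]
    field_simp; ring

lemma sep_all {A B C : M2} (h1 : (bl A B C).PosSemidef)
    (h2 : (bl A Bᴴ C).PosSemidef) : bl A B C ∈ SepC := by
  have hA := bl_psdA h1
  by_cases hd : A.det = 0
  · obtain ⟨f, hf, hAf⟩ := exists_mulVec_eq_zero_iff.2 hd
    obtain ⟨V, hV1, hV2, r, hr, hV⟩ := unit_first hf
    have hfe : f = r • (V.col 0) := by ext i; simp [hV i]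
    rw [hfe, mulVec_smul] at hAf
    have he : A *ᵥ V.col 0 = 0 := (smul_eq_zero.1 hAf).resolve_left hr
    have k1 := h1.mul_mul_conjTranspose_same ((1 : M2) ⊗ₖ Vᴴ)
    have k2 := h2.mul_mul_conjTranspose_same ((1 : M2) ⊗ₖ Vᴴ)
    rw [bl_congr] at k1 k2
    have cV2 : ∀ Z : M2, V * (Vᴴ * Z) = Z := fun Z => by rw [← mul_assoc, hV2, one_mul]
    have s := sep_corner (A := Vᴴ * A * Vᴴᴴ) (B := Vᴴ * B * Vᴴᴴ) (C := Vᴴ * C * Vᴴᴴ)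
      (by
        have : (Vᴴ * A * Vᴴᴴ) 0 0 = (Vᴴ *ᵥ (A *ᵥ V.col 0)) 0 := by
          rw [mulVec_mulVec, conjTranspose_conjTranspose]; rfl
        rw [this, he]; simp)
      k1 (by
        convert k2 using 2
        simp only [conjTranspose_mul, conjTranspose_conjTranspose, mul_assoc])
    have s' := sepC_congr V s
    rw [bl_congr] at s'
    simpa only [conjTranspose_conjTranspose, mul_assoc, cV2, hV2, mul_one] using s'
  · exact sep_posDef (hA.posDef_iff_det_ne_zero.2 hd) h1 h2

end Aux

/-- The Peres–Horodecki PPT criterion: a two-qubit density matrix is separable if and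
only if its partial transpose is positive semidefinite. -/
theorem stmt11 (ρ : Matrix (Fin 2 × Fin 2) (Fin 2 × Fin 2) ℂ) (hρ : IsDensity ρ) :
    Separable ρ ↔ (ptranspose2 ρ).PosSemidef := by
  refine ⟨ppt_of_separable, fun h => ?_⟩
  obtain ⟨A, B, C, e1, e2⟩ := bl_exists hρ.1.1
  have h1 := hρ.1
  have h2 := h.transpose
  rw [e2] at h2
  refine separable_of_sepC ?_ hρ.2
  rw [e1] at h1 ⊢
  exact sep_all h1 h2
end
end

section
/- If ρ is a separable density matrix on ℂ² ⊗ ℂ², then c² = Σ_{i,j=1}^3 Tr(ρ(σ_i ⊗ σ_j))² ≤ 1. Hence any two-qubit density matrix whose correlation component has squared length greater than 1 is entangled. -/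
open scoped ComplexOrder Kronecker

noncomputable section

/-- The three Pauli matrices `σ₁, σ₂, σ₃`. -/
def pauli : Fin 3 → Matrix (Fin 2) (Fin 2) ℂ :=
  ![!![0, 1; 1, 0], !![0, -Complex.I; Complex.I, 0], !![1, 0; 0, -1]]

/-- `c² = Σᵢⱼ Tr(ρ(σᵢ ⊗ σⱼ))²`, the squared length of the correlation component. -/
def cSq (ρ : Matrix (Fin 2 × Fin 2) (Fin 2 × Fin 2) ℂ) : ℝ :=
  ∑ i : Fin 3, ∑ j : Fin 3, ((ρ * (pauli i ⊗ₖ pauli j)).trace.re) ^ 2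

/-- Bloch vector of a qubit density matrix. -/
lemma bloch_bound (A : Matrix (Fin 2) (Fin 2) ℂ) (hA : IsDensity A) :
    ∃ v : Fin 3 → ℝ, (∀ i, (A * pauli i).trace = (v i : ℂ)) ∧ ∑ i, v i ^ 2 ≤ 1 := by
  obtain ⟨hp, ht⟩ := hA
  have hd := hp.det_nonneg
  have h00 := hp.isHermitian.apply 0 0
  have h11 := hp.isHermitian.apply 1 1
  have h01 := hp.isHermitian.apply 0 1
  rw [Matrix.det_fin_two] at hd
  rw [Matrix.trace_fin_two] at ht
  rw [Complex.le_def] at hd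
  rw [Complex.ext_iff] at h00 h11 h01 ht
  simp at hd h00 h11 h01 ht
  obtain ⟨a1, a2⟩ := h01
  obtain ⟨t1, t2⟩ := ht
  have e0 : (A 0 0).im = 0 := by linarith
  have e1 : (A 1 1).im = 0 := by linarith
  refine ⟨![2 * (A 0 1).re, -2 * (A 0 1).im, (A 0 0).re - (A 1 1).re], ?_, ?_⟩
  · intro i
    fin_cases i <;>
    · simp [pauli, Matrix.trace_fin_two, Matrix.mul_apply, Fin.sum_univ_two]
      apply Complex.ext <;> simp <;> linarith
  · simp [Fin.sum_univ_three]
    have b1 : (A 1 0).re = (A 0 1).re := by linarith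
    have b2 : (A 1 0).im = -(A 0 1).im := by linarith
    have hd1 := hd.1
    rw [b1, b2, e0, e1] at hd1
    have : (A 1 1).re = 1 - (A 0 0).re := by linarith
    rw [this] at hd1 ⊢
    nlinarith

lemma sep_bound (ρ : Matrix (Fin 2 × Fin 2) (Fin 2 × Fin 2) ℂ) (h : Separable ρ) :
    cSq ρ ≤ 1 := by
  obtain ⟨k, lam, ρ1, ρ2, hl, hs, h1, h2, rfl⟩ := h
  choose a ha ha1 using fun i => bloch_bound (ρ1 i) (h1 i)
  choose b hb hb1 using fun i => bloch_bound (ρ2 i) (h2 i)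
  have key : ∀ i j, (((∑ x, (lam x : ℂ) • (ρ1 x ⊗ₖ ρ2 x)) *
      (pauli i ⊗ₖ pauli j)).trace.re) = ∑ x, lam x * (a x i * b x j) := by
    intro i j
    rw [Finset.sum_mul, Matrix.trace_sum, Complex.re_sum]
    refine Finset.sum_congr rfl fun x _ => ?_
    rw [Matrix.smul_mul, Matrix.trace_smul, ← Matrix.mul_kronecker_mul, Matrix.trace_kronecker,
      ha, hb, smul_eq_mul]
    norm_cast
  have jensen : ∀ i j, (∑ x, lam x * (a x i * b x j)) ^ 2
      ≤ ∑ x, lam x * (a x i * b x j) ^ 2 := fun i j =>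
    Real.pow_arith_mean_le_arith_mean_pow_of_even Finset.univ lam _ (fun x _ => hl x) hs even_two
  unfold cSq
  simp only [key]
  calc _ ≤ ∑ i : Fin 3, ∑ j : Fin 3, ∑ x, lam x * (a x i * b x j) ^ 2 :=
        Finset.sum_le_sum fun i _ => Finset.sum_le_sum fun j _ => jensen i j
    _ = ∑ x, lam x * ((∑ i, a x i ^ 2) * (∑ j, b x j ^ 2)) := by
        simp only [Fin.sum_univ_three, ← Finset.sum_add_distrib]
        refine Finset.sum_congr rfl fun x _ => ?_
        ring
    _ ≤ ∑ x, lam x * 1 := by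
        refine Finset.sum_le_sum fun x _ => mul_le_mul_of_nonneg_left ?_ (hl x)
        exact mul_le_one₀ (ha1 x) (Finset.sum_nonneg fun _ _ => sq_nonneg _) (hb1 x)
    _ = 1 := by simpa using hs

/-- Any separable two-qubit state has `c² ≤ 1`; hence any two-qubit density matrix
whose correlation component has squared length greater than 1 is entangled. -/
theorem stmt15 (ρ : Matrix (Fin 2 × Fin 2) (Fin 2 × Fin 2) ℂ) (hρ : IsDensity ρ) :
    (Separable ρ → cSq ρ ≤ 1) ∧ (1 < cSq ρ → ¬ Separable ρ) := by
  exact ⟨sep_bound ρ, fun h hs => absurd (sep_bound ρ hs) (not_le.mpr h)⟩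
end
end

section
/- If ρ is a separable density matrix on ℂ² ⊗ ℂ², then both c² ≤ 1 + (a² − b²) and c² ≤ 1 + (b² − a²) hold; equivalently c² ≤ 1 − |a² − b²|. Hence any two-qubit state whose correlation component lies beyond the hypersphere of squared radius 1 − |a² − b²| is entangled. -/
open scoped ComplexOrder Kronecker

noncomputable section

/-- `a² = Σᵢ Tr(ρ(σᵢ ⊗ I₂))²`, the squared length of the first Bloch component. -/
def aSq (ρ : Matrix (Fin 2 × Fin 2) (Fin 2 × Fin 2) ℂ) : ℝ :=
  ∑ i : Fin 3, ((ρ * (pauli i ⊗ₖ (1 : Matrix (Fin 2) (Fin 2) ℂ))).trace.re) ^ 2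

/-- `b² = Σᵢ Tr(ρ(I₂ ⊗ σᵢ))²`, the squared length of the second Bloch component. -/
def bSq (ρ : Matrix (Fin 2 × Fin 2) (Fin 2 × Fin 2) ℂ) : ℝ :=
  ∑ i : Fin 3, ((ρ * ((1 : Matrix (Fin 2) (Fin 2) ℂ) ⊗ₖ pauli i)).trace.re) ^ 2

/-- Bloch component. -/
def blochC (M : Matrix (Fin 2) (Fin 2) ℂ) (i : Fin 3) : ℝ := (M * pauli i).trace.re

theorem bloch_trace {M : Matrix (Fin 2) (Fin 2) ℂ} (h : IsDensity M) (i : Fin 3) :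
    (M * pauli i).trace = (blochC M i : ℂ) := by
  have hh := h.1.1
  have h01 := hh.apply 0 1
  have h00 := hh.apply 0 0
  have h11 := hh.apply 1 1
  rw [Complex.ext_iff] at h01 h00 h11
  simp at h01 h00 h11
  apply Complex.ext
  · simp [blochC]
  · fin_cases i <;> simp [pauli, Matrix.trace, Matrix.mul_apply, Fin.sum_univ_two] <;> linarith

theorem bloch_le {M : Matrix (Fin 2) (Fin 2) ℂ} (h : IsDensity M) :
    ∑ i, blochC M i ^ 2 ≤ 1 := by
  have hh := h.1.1
  have h01 := hh.apply 0 1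
  have h00 := hh.apply 0 0
  have h11 := hh.apply 1 1
  have hd := h.1.det_nonneg
  have ht := h.2
  rw [Complex.ext_iff] at h01 h00 h11 ht
  rw [Complex.le_def] at hd
  simp [Matrix.det_fin_two, Matrix.trace, Fin.sum_univ_two] at h01 h00 h11 hd ht
  obtain ⟨e1, e2⟩ := h01
  have e3 : (M 0 0).im = 0 := by linarith
  have e4 : (M 1 1).im = 0 := by linarith
  have e5 : (M 1 1).re = 1 - (M 0 0).re := by linarith [ht.1]
  have e6 : (M 1 0).im = - (M 0 1).im := by linarith
  have hd1 := hd.1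
  rw [e3, e4, e5, e6, e1] at hd1
  simp [blochC, pauli, Matrix.trace, Matrix.mul_apply, Fin.sum_univ_three, Fin.sum_univ_two]
  rw [e5, e6, e1]
  nlinarith

theorem dot_bound (u v : Fin 3 → ℝ) (hu : ∑ i, u i ^ 2 ≤ 1) (hv : ∑ i, v i ^ 2 ≤ 1) :
    -1 ≤ ∑ i, u i * v i ∧ ∑ i, u i * v i ≤ 1 := by
  simp only [Fin.sum_univ_three] at *
  constructor
  · nlinarith [sq_nonneg (u 0 + v 0), sq_nonneg (u 1 + v 1), sq_nonneg (u 2 + v 2)]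
  · nlinarith [sq_nonneg (u 0 - v 0), sq_nonneg (u 1 - v 1), sq_nonneg (u 2 - v 2)]

theorem key_ineq {k : ℕ} (lam : Fin k → ℝ) (u v : Fin k → Fin 3 → ℝ) (hl : ∀ i, 0 ≤ lam i)
    (hs : ∑ i, lam i = 1) (hu : ∀ k, ∑ i, u k i ^ 2 ≤ 1) (hv : ∀ k, ∑ i, v k i ^ 2 ≤ 1) :
    ∑ i, ∑ j, (∑ k, lam k * (u k i * v k j)) ^ 2 ≤
      1 + (∑ i, (∑ k, lam k * u k i) ^ 2 - ∑ i, (∑ k, lam k * v k i) ^ 2) := by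
  have h0 : 0 ≤ ∑ p, ∑ q, lam p * lam q *
      ((1 + ∑ i, u p i * u q i) * (1 - ∑ i, v p i * v q i)) := by
    refine Finset.sum_nonneg fun p _ => Finset.sum_nonneg fun q _ => ?_
    have h1 := (dot_bound _ _ (hu p) (hu q)).1
    have h2 := (dot_bound _ _ (hv p) (hv q)).2
    exact mul_nonneg (mul_nonneg (hl p) (hl q)) (mul_nonneg (by linarith) (by linarith))
  have hone : (1 : ℝ) = (∑ p, lam p) * (∑ q, lam q) := by rw [hs]; norm_num
  have e : ∑ p, ∑ q, lam p * lam q *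
      ((1 + ∑ i, u p i * u q i) * (1 - ∑ i, v p i * v q i)) =
      1 + (∑ i, (∑ k, lam k * u k i) ^ 2 - ∑ i, (∑ k, lam k * v k i) ^ 2) -
      ∑ i, ∑ j, (∑ k, lam k * (u k i * v k j)) ^ 2 := by
    conv_rhs => rw [hone]
    simp only [Fin.sum_univ_three, sq, Finset.sum_mul_sum, ← Finset.sum_add_distrib,
      ← Finset.sum_sub_distrib]
    refine Finset.sum_congr rfl fun p _ => Finset.sum_congr rfl fun q _ => ?_
    ring
  linarith

theorem trace_sep {k : ℕ} (lam : Fin k → ℝ) (ρ1 ρ2 : Fin k → Matrix (Fin 2) (Fin 2) ℂ)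
    (P Q : Matrix (Fin 2) (Fin 2) ℂ) (x y : Fin k → ℝ)
    (hx : ∀ i, (ρ1 i * P).trace = (x i : ℂ)) (hy : ∀ i, (ρ2 i * Q).trace = (y i : ℂ)) :
    ((∑ i, (lam i : ℂ) • (ρ1 i ⊗ₖ ρ2 i)) * (P ⊗ₖ Q)).trace.re = ∑ i, lam i * (x i * y i) := by
  rw [Finset.sum_mul, Matrix.trace_sum, Complex.re_sum]
  refine Finset.sum_congr rfl fun i _ => ?_
  rw [Matrix.smul_mul, Matrix.trace_smul, ← Matrix.mul_kronecker_mul, Matrix.trace_kronecker,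
    hx, hy, smul_eq_mul, ← Complex.ofReal_mul, ← Complex.ofReal_mul, Complex.ofReal_re]

theorem sep_ineq (ρ : Matrix (Fin 2 × Fin 2) (Fin 2 × Fin 2) ℂ) (h : Separable ρ) :
    cSq ρ ≤ 1 + (aSq ρ - bSq ρ) ∧ cSq ρ ≤ 1 + (bSq ρ - aSq ρ) := by
  obtain ⟨k, lam, ρ1, ρ2, hl, hs, h1, h2, rfl⟩ := h
  have t1 : ∀ i, (ρ1 i * 1).trace = ((1 : ℝ) : ℂ) := fun i => by simp [(h1 i).2]
  have t2 : ∀ i, (ρ2 i * 1).trace = ((1 : ℝ) : ℂ) := fun i => by simp [(h2 i).2]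
  have ha : aSq (∑ i, (lam i : ℂ) • (ρ1 i ⊗ₖ ρ2 i)) =
      ∑ i, (∑ k, lam k * blochC (ρ1 k) i) ^ 2 := by
    unfold aSq
    refine Finset.sum_congr rfl fun i _ => ?_
    rw [trace_sep lam ρ1 ρ2 _ _ _ (fun _ => 1) (fun k => bloch_trace (h1 k) i) t2]
    simp
  have hb : bSq (∑ i, (lam i : ℂ) • (ρ1 i ⊗ₖ ρ2 i)) =
      ∑ i, (∑ k, lam k * blochC (ρ2 k) i) ^ 2 := by
    unfold bSq
    refine Finset.sum_congr rfl fun i _ => ?_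
    rw [trace_sep lam ρ1 ρ2 _ _ (fun _ => 1) _ t1 (fun k => bloch_trace (h2 k) i)]
    simp
  have hc : cSq (∑ i, (lam i : ℂ) • (ρ1 i ⊗ₖ ρ2 i)) =
      ∑ i, ∑ j, (∑ k, lam k * (blochC (ρ1 k) i * blochC (ρ2 k) j)) ^ 2 := by
    unfold cSq
    refine Finset.sum_congr rfl fun i _ => Finset.sum_congr rfl fun j _ => ?_
    rw [trace_sep lam ρ1 ρ2 _ _ _ _ (fun k => bloch_trace (h1 k) i)
      (fun k => bloch_trace (h2 k) j)]
  rw [ha, hb, hc]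
  refine ⟨key_ineq lam _ _ hl hs (fun k => bloch_le (h1 k)) (fun k => bloch_le (h2 k)), ?_⟩
  have := key_ineq lam _ _ hl hs (fun k => bloch_le (h2 k)) (fun k => bloch_le (h1 k))
  rw [Finset.sum_comm] at this
  simpa only [mul_comm (blochC (ρ2 _) _)] using this

/-- A separable two-qubit state satisfies `c² ≤ 1 + (a² − b²)` and
`c² ≤ 1 + (b² − a²)`, i.e. `c² ≤ 1 − |a² − b²|`; hence any state whose correlation
component lies beyond the hypersphere of squared radius `1 − |a² − b²|` is entangled. -/
theorem stmt16 (ρ : Matrix (Fin 2 × Fin 2) (Fin 2 × Fin 2) ℂ) (hρ : IsDensity ρ) :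
    (Separable ρ →
      cSq ρ ≤ 1 + (aSq ρ - bSq ρ) ∧ cSq ρ ≤ 1 + (bSq ρ - aSq ρ) ∧
      cSq ρ ≤ 1 - |aSq ρ - bSq ρ|) ∧
    (1 - |aSq ρ - bSq ρ| < cSq ρ → ¬ Separable ρ) := by
  have H : Separable ρ →
      cSq ρ ≤ 1 + (aSq ρ - bSq ρ) ∧ cSq ρ ≤ 1 + (bSq ρ - aSq ρ) ∧
      cSq ρ ≤ 1 - |aSq ρ - bSq ρ| := by
    intro h
    obtain ⟨h1, h2⟩ := sep_ineq ρ h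
    refine ⟨h1, h2, ?_⟩
    have : |aSq ρ - bSq ρ| ≤ 1 - cSq ρ := abs_le.2 ⟨by linarith, by linarith⟩
    linarith
  exact ⟨H, fun h hs => absurd (H hs).2.2 (not_le.2 h)⟩
end
end

section
/- Let ψ ∈ ℂ² ⊗ ℂ² be a unit vector and ρ = |ψ⟩⟨ψ| the corresponding pure density matrix. Then a² = b² (the two reduced states of a pure bipartite state are equally mixed), and ψ is entangled (i.e., not of the form φ ⊗ χ) if and only if c² > 1; equivalently, ψ is entangled if and only if a² = b² < 1. -/
open scoped ComplexOrder Kronecker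

noncomputable section

/-- The outer product `|ψ⟩⟨ψ| = ψψ*`. -/
def outer {ι : Type*} (ψ : ι → ℂ) : Matrix ι ι ℂ :=
  Matrix.of fun i j => ψ i * (starRingEnd ℂ) (ψ j)

/-- A two-qubit vector is a product vector iff its coefficient determinant vanishes. -/
lemma product_iff_det (ψ : Fin 2 × Fin 2 → ℂ) :
    (∃ (φ χ : Fin 2 → ℂ), ψ = tens φ χ) ↔ ψ (0,0) * ψ (1,1) - ψ (0,1) * ψ (1,0) = 0 := by
  constructor
  · rintro ⟨φ, χ, rfl⟩
    simp only [tens]; ring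
  · intro h
    by_cases h0 : ψ (0,0) = 0
    · by_cases h1 : ψ (0,1) = 0
      · refine ⟨![0, 1], ![ψ (1,0), ψ (1,1)], ?_⟩
        funext ⟨i, j⟩
        fin_cases i <;> fin_cases j <;> simp [tens, h0, h1]
      · have h2 : ψ (1,0) = 0 := by
          rw [h0] at h
          have : ψ (0,1) * ψ (1,0) = 0 := by linear_combination -h
          exact (mul_eq_zero.mp this).resolve_left h1
        refine ⟨![ψ (0,1), ψ (1,1)], ![0, 1], ?_⟩
        funext ⟨i, j⟩
        fin_cases i <;> fin_cases j <;> simp [tens, h0, h2]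
    · refine ⟨![1, ψ (1,0) / ψ (0,0)], ![ψ (0,0), ψ (0,1)], ?_⟩
      funext ⟨i, j⟩
      fin_cases i <;> fin_cases j <;> simp [tens, h0]
      field_simp
      linear_combination h

/-- Squared norm in real coordinates. -/
def nSq (ψ : Fin 2 × Fin 2 → ℂ) : ℝ :=
  Complex.normSq (ψ (0,0)) + Complex.normSq (ψ (0,1)) + Complex.normSq (ψ (1,0))
    + Complex.normSq (ψ (1,1))

lemma nSq_eq_one (ψ : Fin 2 × Fin 2 → ℂ) (hψ : inn ψ ψ = 1) : nSq ψ = 1 := by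
  have h := congrArg Complex.re hψ
  simp [inn, Fintype.sum_prod_type, Fin.sum_univ_two] at h
  simp only [nSq, Complex.normSq_apply]
  linarith

lemma aSq_eq (ψ : Fin 2 × Fin 2 → ℂ) : aSq (outer ψ) =
    nSq ψ ^ 2 - 4 * Complex.normSq (ψ (0,0) * ψ (1,1) - ψ (0,1) * ψ (1,0)) := by
  simp [aSq, outer, pauli, Matrix.trace, Matrix.mul_apply, Fintype.sum_prod_type,
    Fin.sum_univ_two, Fin.sum_univ_three, Matrix.one_apply, nSq, Complex.normSq_apply]
  ring

lemma bSq_eq (ψ : Fin 2 × Fin 2 → ℂ) : bSq (outer ψ) =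
    nSq ψ ^ 2 - 4 * Complex.normSq (ψ (0,0) * ψ (1,1) - ψ (0,1) * ψ (1,0)) := by
  simp [bSq, outer, pauli, Matrix.trace, Matrix.mul_apply, Fintype.sum_prod_type,
    Fin.sum_univ_two, Fin.sum_univ_three, Matrix.one_apply, nSq, Complex.normSq_apply]
  ring

lemma cSq_eq (ψ : Fin 2 × Fin 2 → ℂ) : cSq (outer ψ) =
    nSq ψ ^ 2 + 8 * Complex.normSq (ψ (0,0) * ψ (1,1) - ψ (0,1) * ψ (1,0)) := by
  simp [cSq, outer, pauli, Matrix.trace, Matrix.mul_apply, Fintype.sum_prod_type,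
    Fin.sum_univ_two, Fin.sum_univ_three, nSq, Complex.normSq_apply]
  ring

/-- For a pure two-qubit state `ρ = |ψ⟩⟨ψ|`: the two reduced states are equally mixed
(`a² = b²`), and `ψ` is entangled iff `c² > 1`, equivalently iff `a² = b² < 1`. -/
theorem stmt17 (ψ : Fin 2 × Fin 2 → ℂ) (hψ : inn ψ ψ = 1) :
    aSq (outer ψ) = bSq (outer ψ) ∧
    ((¬ ∃ (φ χ : Fin 2 → ℂ), ψ = tens φ χ) ↔ 1 < cSq (outer ψ)) ∧
    ((¬ ∃ (φ χ : Fin 2 → ℂ), ψ = tens φ χ) ↔ aSq (outer ψ) < 1) := by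
  rw [product_iff_det, aSq_eq, bSq_eq, cSq_eq, nSq_eq_one ψ hψ, ← ne_eq, ← Complex.normSq_pos]
  refine ⟨rfl, ⟨fun h => by linarith, fun h => by linarith⟩,
    ⟨fun h => by linarith, fun h => by linarith⟩⟩
end
end

section
/- For every density matrix ρ on ℂ² ⊗ ℂ²: Tr( ρ^{T₂} · (I₂ ⊗ σ₂) ρ (I₂ ⊗ σ₂) ) = ¼ (1 + a² − b² − c²). Consequently, if b² − a² + c² > 1 then the partial transpose ρ^{T₂} has a negative expectation value with the state (I₂ ⊗ σ₂) ρ (I₂ ⊗ σ₂) and hence is not positive semidefinite; in particular, the partial transpose of every entangled pure two-qubit state (for which a² = b² and c² > 1) fails to be positive semidefinite. -/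
open scoped ComplexOrder Kronecker

noncomputable section

theorem pauli_herm (i : Fin 3) : (pauli i).IsHermitian := by
  ext a b
  fin_cases i <;> fin_cases a <;> fin_cases b <;> simp [pauli]

theorem trace_part (ρ : Matrix (Fin 2 × Fin 2) (Fin 2 × Fin 2) ℂ) (hρ : IsDensity ρ) :
    (ptranspose2 ρ *
        (((1 : Matrix (Fin 2) (Fin 2) ℂ) ⊗ₖ pauli 1) * ρ *
          ((1 : Matrix (Fin 2) (Fin 2) ℂ) ⊗ₖ pauli 1))).trace
      = (((1 + aSq ρ - bSq ρ - cSq ρ) / 4 : ℝ) : ℂ) := by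
  obtain ⟨hp, ht⟩ := hρ
  have hh : ∀ p q, (ρ p q).re = (ρ q p).re ∧ (ρ p q).im = -(ρ q p).im := by
    intro p q
    have h := hp.1.apply p q
    constructor
    · rw [← h]; simp
    · rw [← h]; simp
  have hd : ∀ p, (ρ p p).im = 0 := fun p => by linarith [(hh p p).2]
  have ht' := congrArg Complex.re ht
  simp only [Matrix.trace, Matrix.diag, Fintype.sum_prod_type, Fin.sum_univ_two,
    Complex.add_re, Complex.one_re] at ht'
  have h1 : (1:ℝ) = 1 ^ 2 := by norm_num
  rw [h1, ← ht']
  have e1 := hh (0,1) (0,0)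
  have e2 := hh (1,0) (0,0)
  have e3 := hh (1,1) (0,0)
  have e4 := hh (1,0) (0,1)
  have e5 := hh (1,1) (0,1)
  have e6 := hh (1,1) (1,0)
  apply Complex.ext
  · simp [aSq, bSq, cSq, pauli, ptranspose2, Matrix.trace, Matrix.mul_apply,
      Fintype.sum_prod_type, Fin.sum_univ_two, Fin.sum_univ_three, Matrix.one_apply,
      Matrix.kroneckerMap_apply, hd, e1, e2, e3, e4, e5, e6, -Complex.ofReal_div,
      -Complex.ofReal_add, -Complex.ofReal_sub, -Complex.ofReal_pow, Complex.ofReal_re]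
    ring
  · simp [pauli, ptranspose2, Matrix.trace, Matrix.mul_apply,
      Fintype.sum_prod_type, Fin.sum_univ_two, Matrix.one_apply,
      Matrix.kroneckerMap_apply, hd, e1, e2, e3, e4, e5, e6, -Complex.ofReal_div,
      -Complex.ofReal_add, -Complex.ofReal_sub, -Complex.ofReal_pow, Complex.ofReal_im]
    ring

open scoped MatrixOrder Matrix.Norms.L2Operator in
theorem exists_factor (ρ : Matrix (Fin 2 × Fin 2) (Fin 2 × Fin 2) ℂ) (hρ : ρ.PosSemidef) :
    ∃ B : Matrix (Fin 2 × Fin 2) (Fin 2 × Fin 2) ℂ, ρ = B.conjTranspose * B :=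
  CStarAlgebra.nonneg_iff_eq_star_mul_self.mp hρ.nonneg

theorem trace_nonneg_part (ρ P : Matrix (Fin 2 × Fin 2) (Fin 2 × Fin 2) ℂ)
    (hρ : ρ.PosSemidef) (hP : P.PosSemidef) :
    0 ≤ (P * (((1 : Matrix (Fin 2) (Fin 2) ℂ) ⊗ₖ pauli 1) * ρ *
          ((1 : Matrix (Fin 2) (Fin 2) ℂ) ⊗ₖ pauli 1))).trace := by
  have hS : ((1 : Matrix (Fin 2) (Fin 2) ℂ) ⊗ₖ pauli 1).conjTranspose
      = (1 : Matrix (Fin 2) (Fin 2) ℂ) ⊗ₖ pauli 1 := by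
    rw [Matrix.conjTranspose_kronecker, (pauli_herm 1).eq, Matrix.conjTranspose_one]
  set S := (1 : Matrix (Fin 2) (Fin 2) ℂ) ⊗ₖ pauli 1
  obtain ⟨B, rfl⟩ := exists_factor ρ hρ
  have h := (hP.mul_mul_conjTranspose_same (B * S)).trace_nonneg
  rw [Matrix.conjTranspose_mul, hS] at h
  have e : (P * (S * (B.conjTranspose * B) * S)).trace
      = (B * S * P * (S * B.conjTranspose)).trace := by
    rw [show P * (S * (B.conjTranspose * B) * S) = (P * (S * B.conjTranspose)) * (B * S) by
      simp only [Matrix.mul_assoc], Matrix.trace_mul_comm]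
    simp only [Matrix.mul_assoc]
  rw [e]; exact h

theorem pure_trace (ψ : Fin 2 × Fin 2 → ℂ) :
    (ptranspose2 (outer ψ) *
        (((1 : Matrix (Fin 2) (Fin 2) ℂ) ⊗ₖ pauli 1) * outer ψ *
          ((1 : Matrix (Fin 2) (Fin 2) ℂ) ⊗ₖ pauli 1))).trace
      = ((-2 * Complex.normSq (ψ (0,0) * ψ (1,1) - ψ (0,1) * ψ (1,0)) : ℝ) : ℂ) := by
  rw [Complex.ofReal_mul, Complex.normSq_eq_conj_mul_self]
  simp [pauli, ptranspose2, outer, Matrix.trace, Matrix.mul_apply,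
      Fintype.sum_prod_type, Fin.sum_univ_two, Matrix.one_apply,
      Matrix.kroneckerMap_apply]
  ring_nf
  simp only [Complex.I_sq]
  ring

theorem tens_of_det (ψ : Fin 2 × Fin 2 → ℂ)
    (h : ψ (0,0) * ψ (1,1) - ψ (0,1) * ψ (1,0) = 0) :
    ∃ (φ χ : Fin 2 → ℂ), ψ = tens φ χ := by
  by_cases h0 : ψ (0,0) = 0
  · have h' : ψ (0,1) = 0 ∨ ψ (1,0) = 0 := by
      rw [h0] at h; simpa using h
    rcases h' with h1 | h1
    · refine ⟨![0, 1], ![ψ (1,0), ψ (1,1)], ?_⟩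
      ext ⟨i, j⟩
      fin_cases i <;> fin_cases j <;> simp [tens, h0, h1]
    · refine ⟨![ψ (0,1), ψ (1,1)], ![0, 1], ?_⟩
      ext ⟨i, j⟩
      fin_cases i <;> fin_cases j <;> simp [tens, h0, h1]
  · refine ⟨![1, ψ (1,0) / ψ (0,0)], ![ψ (0,0), ψ (0,1)], ?_⟩
    ext ⟨i, j⟩
    fin_cases i <;> fin_cases j <;> simp [tens, h0]
    field_simp
    linear_combination h

/-- `Tr(ρ^{T₂} (I₂⊗σ₂) ρ (I₂⊗σ₂)) = (1 + a² − b² − c²)/4`; so if `b² − a² + c² > 1`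
then `ρ^{T₂}` is not positive semidefinite, and in particular the partial transpose of
every entangled pure two-qubit state fails to be positive semidefinite. -/
theorem stmt18 (ρ : Matrix (Fin 2 × Fin 2) (Fin 2 × Fin 2) ℂ) (hρ : IsDensity ρ) :
    (ptranspose2 ρ *
        (((1 : Matrix (Fin 2) (Fin 2) ℂ) ⊗ₖ pauli 1) * ρ *
          ((1 : Matrix (Fin 2) (Fin 2) ℂ) ⊗ₖ pauli 1))).trace
      = (((1 + aSq ρ - bSq ρ - cSq ρ) / 4 : ℝ) : ℂ) ∧
    (1 < bSq ρ - aSq ρ + cSq ρ → ¬ (ptranspose2 ρ).PosSemidef) ∧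
    (∀ ψ : Fin 2 × Fin 2 → ℂ, inn ψ ψ = 1 → ρ = outer ψ →
      (¬ ∃ (φ χ : Fin 2 → ℂ), ψ = tens φ χ) → ¬ (ptranspose2 ρ).PosSemidef) := by
  have h1 := trace_part ρ hρ
  refine ⟨h1, ?_, ?_⟩
  · intro h hP
    have h2 := trace_nonneg_part ρ _ hρ.1 hP
    rw [h1, Complex.zero_le_real] at h2
    linarith
  · intro ψ _ hψ hent hP
    have h2 := trace_nonneg_part ρ _ hρ.1 hP
    rw [hψ, pure_trace, Complex.zero_le_real] at h2
    apply hent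
    apply tens_of_det
    rw [← Complex.normSq_eq_zero]
    linarith [Complex.normSq_nonneg (ψ (0,0) * ψ (1,1) - ψ (0,1) * ψ (1,0))]
end
end
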